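/- arXiv:1905.06291 — 3 statements merged into one kernel-verified Lean document; each statement's English description precedes it below -/
import Mathlib

section
/- Suppose f : ℝⁿ × ℝᵖ → ℝⁿ is continuously differentiable, ℓₓ-Lipschitz in x and ℓᵤ-Lipschitz in u, and admits a differentiable, ℓ-Lipschitz steady-state map h : ℝᵖ → ℝⁿ with f(h(u),u) = 0 for all u. Assume that for every initial condition x₀ ∈ ℝⁿ and every constant input û ∈ ℝᵖ there is a complete solution of ẋ = f(x,û) with x(0) = x₀, and that there exist K, τ > 0 such that every such solution satisfies ‖x(t) − h(û)‖ ≤ K‖x₀ − h(û)‖e^{−τt} for all t ≥ 0. Then there exist a differentiable function W : ℝⁿ × ℝᵖ → ℝ and constants α, β, γ, ζ > 0 such that for all (x,u): α‖x − h(u)‖² ≤ W(x,u) ≤ β‖x − h(u)‖², ⟨∇ₓW(x,u), f(x,u)⟩ ≤ −γ‖x − h(u)‖², and ‖∇ᵤW(x,u)‖ ≤ ζ‖x − h(u)‖. -/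
open Filter Metric Real
open scoped RealInnerProductSpace Topology NNReal

/-
Adjoining `u̇ = 0` to the plant gives an autonomous system on pairs `(x,u)` whose flow `φ` carries
the deviation `e(x,u) = x - h(u)`. The Lyapunov function is `W(x,u) = ∫₀ᵀ ‖e(φ_t(x,u))‖² dt`.
The decay of `e` bounds `W` from above, and Grönwall's inequality backward in time bounds it from
below, because a solution cannot reach an equilibrium faster than at the rate `ℓₓ`. The flow is
differentiable with derivative solving the variational equation, so `W` is differentiable, and
the semigroup law makes its derivative along the field equal to `‖e(φ_T(x,u))‖² - ‖e(x,u)‖²`,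
which is at most `-‖e(x,u)‖² / 2` once `T` is large. Differentiating under the integral sign gives
`DW = ∫₀ᵀ 2 ⟪e(φ_t), D(e ∘ φ_t)⟫ dt`, where the first factor is at most `K ‖e(x,u)‖` and the second
is bounded by a Lipschitz constant of `e ∘ φ_t`.
-/

open Set

section IntegralCurve

variable {E : Type*} [NormedAddCommGroup E] [NormedSpace ℝ E]
  {v : ℝ → E → E} {L : ℝ≥0} {γ γ₁ γ₂ : ℝ → E} {a b t : ℝ}

theorem hasDerivWithinAt_Ici_of_isIntegralCurveOn_Icc
    (h : IsIntegralCurveOn γ v (Icc a b)) (ht : t ∈ Ico a b) :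
    HasDerivWithinAt γ (v t (γ t)) (Ici t) t :=
  (h t (Ico_subset_Icc_self ht)).mono_of_mem_nhdsWithin <|
    mem_of_superset (Icc_mem_nhdsGE ht.2) (Icc_subset_Icc_left ht.1)

theorem dist_right_le_of_isIntegralCurveOn_Icc (hv : ∀ t, LipschitzWith L (v t))
    (h₁ : IsIntegralCurveOn γ₁ v (Icc a b)) (h₂ : IsIntegralCurveOn γ₂ v (Icc a b))
    (hab : a ≤ b) :
    dist (γ₁ b) (γ₂ b) ≤ dist (γ₁ a) (γ₂ a) * exp (L * (b - a)) :=
  dist_le_of_trajectories_ODE hv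
    h₁.continuousOn (fun _ ht => hasDerivWithinAt_Ici_of_isIntegralCurveOn_Icc h₁ ht)
    h₂.continuousOn (fun _ ht => hasDerivWithinAt_Ici_of_isIntegralCurveOn_Icc h₂ ht)
    le_rfl b (right_mem_Icc.2 hab)

theorem dist_left_le_of_isIntegralCurveOn_Icc (hv : ∀ t, LipschitzWith L (v t))
    (h₁ : IsIntegralCurveOn γ₁ v (Icc a b)) (h₂ : IsIntegralCurveOn γ₂ v (Icc a b))
    (hab : a ≤ b) :
    dist (γ₁ a) (γ₂ a) ≤ dist (γ₁ b) (γ₂ b) * exp (L * (b - a)) := by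
  have hv_rev : ∀ t, LipschitzWith L (((-1 : ℝ) • v ∘ (· * (-1))) t) := fun t => by
    simpa only [neg_smul, one_smul] using! (hv (t * (-1))).neg
  have h_Icc : Icc (-b) (-a) ⊆ {t | t * (-1) ∈ Icc a b} := fun t ht => by
    rwa [mem_ofPred_eq, mul_neg_one, mem_Icc, le_neg, neg_le, and_comm]
  have h_rev := dist_right_le_of_isIntegralCurveOn_Icc hv_rev ((h₁.comp_mul (-1)).mono h_Icc)
    ((h₂.comp_mul (-1)).mono h_Icc) (neg_le_neg hab)
  simpa only [Function.comp_apply, mul_neg, mul_one, neg_neg, neg_sub_neg] using h_rev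

theorem exp_mul_norm_sub_le_of_isIntegralCurveOn {F : E → E} {y : E}
    (hF : LipschitzWith L F) (hy : F y = 0) (hγ : IsIntegralCurveOn γ (fun _ => F) (Ici 0))
    (ht : 0 ≤ t) : exp (-L * t) * ‖γ 0 - y‖ ≤ ‖γ t - y‖ := by
  have h_const : IsIntegralCurveOn (fun _ => y) (fun _ => F) (Icc 0 t) :=
    (isIntegralCurve_const fun _ => hy).isIntegralCurveOn _
  have h_left := dist_left_le_of_isIntegralCurveOn_Icc (fun _ => hF)
    (hγ.mono Icc_subset_Ici_self) h_const ht
  rw [dist_eq_norm, dist_eq_norm, sub_zero] at h_left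
  rwa [neg_mul, exp_neg, inv_mul_le_iff₀' (exp_pos _)]

end IntegralCurve

/-- `φ t z` is the value at time `t ≥ 0` of a solution of the autonomous equation `ẏ = F y` started
at `z`; at `t = 0` only the right derivative is constrained. -/
structure IsForwardFlow {E : Type*} [NormedAddCommGroup E] [NormedSpace ℝ E]
    (F : E → E) (φ : ℝ → E → E) : Prop where
  apply_zero : ∀ z, φ 0 z = z
  isIntegralCurveOn : ∀ z, IsIntegralCurveOn (φ · z) (fun _ => F) (Ici 0)

/-- Each time slice `φ t` with `t ∈ s` is differentiable, and its derivative at any fixed point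
depends continuously on the time `t ∈ s` (no continuity in the point is required). -/
def HasContinuousFDerivOn {E G : Type*} [NormedAddCommGroup E] [NormedSpace ℝ E]
    [NormedAddCommGroup G] [NormedSpace ℝ G] (φ : ℝ → E → G) (s : Set ℝ) : Prop :=
  (∀ t ∈ s, Differentiable ℝ (φ t)) ∧ ∀ z, ContinuousOn (fun t => fderiv ℝ (φ t) z) s

section Linearization

variable {E G : Type*} [NormedAddCommGroup E] [NormedSpace ℝ E]
  [NormedAddCommGroup G] [NormedSpace ℝ G]

theorem exists_norm_sub_sub_fderiv_le_of_isCompact {F : E → G} (hF : ContDiff ℝ 1 F) {C : Set E}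
    (hC : IsCompact C) {η : ℝ} (hη : 0 < η) :
    ∃ δ > 0, ∀ x ∈ C, ∀ y, ‖y - x‖ < δ →
      ‖F y - F x - fderiv ℝ F x (y - x)‖ ≤ η * ‖y - x‖ := by
  have h_unif := hC.uniformContinuousAt_of_continuousAt (fderiv ℝ F)
    (fun _ _ => (hF.continuous_fderiv one_ne_zero).continuousAt) (dist_mem_uniformity hη)
  obtain ⟨δ, hδ, h_near⟩ := mem_uniformity_dist.1 h_unif
  refine ⟨δ, hδ, fun x hx y hy => ?_⟩
  refine (convex_ball x δ).norm_image_sub_le_of_norm_fderiv_le' (𝕜 := ℝ)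
    (fun w _ => hF.differentiable one_ne_zero w) (fun w hw => ?_) (mem_ball_self hδ)
    (mem_ball_iff_norm.2 hy)
  rw [← dist_eq_norm, dist_comm]
  exact (h_near (mem_ball'.1 hw) hx).le

theorem gronwallBound_zero_eq_mul (K ε x : ℝ) :
    gronwallBound 0 K ε x = ε * gronwallBound 0 K 1 x := by
  by_cases hK : K = 0
  · simp [hK, gronwallBound_K0]
  · simp only [gronwallBound_of_K_ne_0 hK]
    ring

-- The bound on `T` keeps the Picard iterates in the unit ball around the identity, where the linear
-- field is bounded by `2 * L`; longer times are reached through `IsForwardFlow.apply_add`.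
theorem exists_isIntegralCurveOn_clm_comp [CompleteSpace E] {A : ℝ → E →L[ℝ] E} {L : ℝ≥0} {T : ℝ}
    (hT : 0 ≤ T) (hLT : 2 * L * T ≤ 1) (hA : ContinuousOn A (Icc 0 T))
    (hAL : ∀ t ∈ Icc 0 T, ‖A t‖ ≤ L) :
    ∃ Y : ℝ → E →L[ℝ] E, Y 0 = .id ℝ E ∧
      IsIntegralCurveOn Y (fun t Z => (A t).comp Z) (Icc 0 T) := by
  have h_bound : ∀ t ∈ Icc 0 T, ∀ Z : E →L[ℝ] E, ‖(A t).comp Z‖ ≤ L * ‖Z‖ := fun t ht Z =>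
    (ContinuousLinearMap.opNorm_comp_le _ _).trans
      (mul_le_mul_of_nonneg_right (hAL t ht) (norm_nonneg Z))
  have h_picard : IsPicardLindelof (fun t (Z : E →L[ℝ] E) => (A t).comp Z)
      ⟨0, left_mem_Icc.2 hT⟩ (.id ℝ E) 1 0 (2 * L) L := by
    refine ⟨fun t ht => ?_, fun Z _ => hA.clm_comp continuousOn_const, fun t ht Z hZ => ?_, ?_⟩
    · refine (LipschitzWith.of_dist_le_mul fun Y Z => ?_).lipschitzOnWith
      simpa only [dist_eq_norm, ContinuousLinearMap.comp_sub] using h_bound t ht (Y - Z)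
    · have hZ' : ‖Z‖ ≤ 2 := by
        have h_id : ‖ContinuousLinearMap.id ℝ E‖ ≤ 1 := ContinuousLinearMap.norm_id_le
        have h_sub : ‖Z - .id ℝ E‖ ≤ 1 := mem_closedBall_iff_norm.1 hZ
        linarith [norm_le_norm_sub_add Z (.id ℝ E)]
      calc ‖(A t).comp Z‖ ≤ L * ‖Z‖ := h_bound t ht Z
        _ ≤ L * 2 := by gcongr
        _ = (2 * L : ℝ≥0) := by push_cast; ring
    · simpa [hT] using hLT
  exact h_picard.exists_eq_forall_mem_Icc_hasDerivWithinAt₀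

end Linearization

namespace IsForwardFlow

variable {E : Type*} [NormedAddCommGroup E] [NormedSpace ℝ E]
  {F : E → E} {φ : ℝ → E → E} {L : ℝ≥0} {s t T : ℝ}

theorem isIntegralCurveOn_Icc (hφ : IsForwardFlow F φ) (z : E) (T : ℝ) :
    IsIntegralCurveOn (φ · z) (fun _ => F) (Icc 0 T) :=
  (hφ.isIntegralCurveOn z).mono Icc_subset_Ici_self

theorem continuousOn (hφ : IsForwardFlow F φ) (z : E) : ContinuousOn (φ · z) (Ici 0) :=
  (hφ.isIntegralCurveOn z).continuousOn

theorem continuousOn_Icc (hφ : IsForwardFlow F φ) (z : E) (T : ℝ) :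
    ContinuousOn (φ · z) (Icc 0 T) :=
  (hφ.isIntegralCurveOn_Icc z T).continuousOn

theorem lipschitzWith (hφ : IsForwardFlow F φ) (hF : LipschitzWith L F) (ht : t ∈ Icc 0 T) :
    LipschitzWith (exp (L * T)).toNNReal (φ t) := by
  refine LipschitzWith.of_dist_le' fun z w => ?_
  have h := dist_right_le_of_isIntegralCurveOn_Icc (fun _ => hF) (hφ.isIntegralCurveOn_Icc z t)
    (hφ.isIntegralCurveOn_Icc w t) ht.1
  rw [hφ.apply_zero, hφ.apply_zero, sub_zero, mul_comm] at h
  refine h.trans ?_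
  gcongr
  exact ht.2

theorem apply_add (hφ : IsForwardFlow F φ) (hF : LipschitzWith L F) (hs : 0 ≤ s) (ht : 0 ≤ t)
    (z : E) : φ (s + t) z = φ t (φ s z) := by
  have h_shift : IsIntegralCurveOn (fun r => φ (s + r) z) (fun _ => F) (Icc 0 t) := by
    intro r hr
    have h := (hφ.isIntegralCurveOn z (s + r) (add_nonneg hs hr.1)).scomp r
      ((hasDerivAt_id r).const_add s).hasDerivWithinAt
      (fun r' (hr' : r' ∈ Icc 0 t) => mem_Ici.2 (add_nonneg hs hr'.1))
    simpa using! h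
  have h := dist_right_le_of_isIntegralCurveOn_Icc (fun _ => hF) h_shift
    (hφ.isIntegralCurveOn_Icc (φ s z) t) ht
  simpa only [add_zero, hφ.apply_zero, dist_self, zero_mul, dist_le_zero] using h

theorem norm_sub_sub_le_gronwallBound (hφ : IsForwardFlow F φ) (hF : LipschitzWith L F)
    {Y : ℝ → E →L[ℝ] E} {z₀ z : E} {ε : ℝ} (hY₀ : Y 0 = .id ℝ E)
    (hY : IsIntegralCurveOn Y (fun t Z => (fderiv ℝ F (φ t z₀)).comp Z) (Icc 0 T))
    (hε : ∀ t ∈ Ico 0 T,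
      ‖F (φ t z) - F (φ t z₀) - fderiv ℝ F (φ t z₀) (φ t z - φ t z₀)‖ ≤ ε)
    (hT : 0 ≤ T) :
    ‖φ T z - φ T z₀ - Y T (z - z₀)‖ ≤ gronwallBound 0 L ε T := by
  have h_bound : ∀ t ∈ Ico 0 T,
      ‖F (φ t z) - F (φ t z₀) - fderiv ℝ F (φ t z₀) (Y t (z - z₀))‖ ≤
        L * ‖φ t z - φ t z₀ - Y t (z - z₀)‖ + ε := by
    intro t ht
    have h_split : F (φ t z) - F (φ t z₀) - fderiv ℝ F (φ t z₀) (Y t (z - z₀)) =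
        fderiv ℝ F (φ t z₀) (φ t z - φ t z₀ - Y t (z - z₀)) +
        (F (φ t z) - F (φ t z₀) - fderiv ℝ F (φ t z₀) (φ t z - φ t z₀)) := by
      simp only [map_sub]
      abel
    rw [h_split]
    refine (norm_add_le _ _).trans (add_le_add ?_ (hε t ht))
    exact ContinuousLinearMap.le_of_opNorm_le _ (norm_fderiv_le_of_lipschitz ℝ hF) _
  have h_deriv : ∀ t ∈ Ico 0 T, HasDerivWithinAt (fun t => φ t z - φ t z₀ - Y t (z - z₀))
      (F (φ t z) - F (φ t z₀) - fderiv ℝ F (φ t z₀) (Y t (z - z₀))) (Ici t) t := by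
    intro t ht
    have hYt := (hasDerivWithinAt_Ici_of_isIntegralCurveOn_Icc hY ht).clm_apply
      (hasDerivWithinAt_const t (Ici t) (z - z₀))
    rw [map_zero, add_zero] at hYt
    exact ((hasDerivWithinAt_Ici_of_isIntegralCurveOn_Icc (hφ.isIntegralCurveOn_Icc z T) ht).sub
      (hasDerivWithinAt_Ici_of_isIntegralCurveOn_Icc (hφ.isIntegralCurveOn_Icc z₀ T) ht)).sub hYt
  have h_gronwall := norm_le_gronwallBound_of_norm_deriv_right_le (δ := 0)
    (((hφ.continuousOn_Icc z T).sub (hφ.continuousOn_Icc z₀ T)).sub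
      (hY.continuousOn.clm_apply continuousOn_const)) h_deriv
    (by simp [hφ.apply_zero, hY₀]) h_bound T (right_mem_Icc.2 hT)
  rwa [sub_zero] at h_gronwall

theorem hasFDerivAt (hφ : IsForwardFlow F φ) (hF : ContDiff ℝ 1 F) (hL : LipschitzWith L F)
    {Y : ℝ → E →L[ℝ] E} {z₀ : E} (hY₀ : Y 0 = .id ℝ E)
    (hY : IsIntegralCurveOn Y (fun t Z => (fderiv ℝ F (φ t z₀)).comp Z) (Icc 0 T))
    (hT : 0 ≤ T) :
    HasFDerivAt (φ T) (Y T) z₀ := by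
  rw [hasFDerivAt_iff_isLittleO, Asymptotics.isLittleO_iff]
  intro κ hκ
  set M : ℝ := exp (L * T)
  have hM : 0 < M := exp_pos _
  obtain ⟨η, hη, hηκ⟩ := exists_pos_mul_lt hκ (M * gronwallBound 0 L 1 T)
  obtain ⟨δ, hδ, h_lin⟩ := exists_norm_sub_sub_fderiv_le_of_isCompact hF
    (isCompact_Icc.image_of_continuousOn (hφ.continuousOn_Icc z₀ T)) hη
  filter_upwards [ball_mem_nhds z₀ (div_pos hδ hM)] with z hz
  have h_lip : ∀ t ∈ Ico 0 T, ‖φ t z - φ t z₀‖ ≤ M * ‖z - z₀‖ := fun t ht => by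
    simpa only [dist_eq_norm, coe_toNNReal _ (exp_pos _).le] using
      (hφ.lipschitzWith hL (Ico_subset_Icc_self ht)).dist_le_mul z z₀
  have h_near : M * ‖z - z₀‖ < δ := by
    rwa [mem_ball_iff_norm, lt_div_iff₀' hM] at hz
  refine (hφ.norm_sub_sub_le_gronwallBound hL (ε := η * (M * ‖z - z₀‖)) hY₀ hY
    (fun t ht => ?_) hT).trans ?_
  · refine (h_lin _ (mem_image_of_mem _ (Ico_subset_Icc_self ht)) _
      ((h_lip t ht).trans_lt h_near)).trans ?_
    gcongr
    exact h_lip t ht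
  · calc gronwallBound 0 L (η * (M * ‖z - z₀‖)) T
        = M * gronwallBound 0 L 1 T * η * ‖z - z₀‖ := by
          rw [gronwallBound_zero_eq_mul]
          ring
      _ ≤ κ * ‖z - z₀‖ := by gcongr

theorem hasContinuousFDerivOn_of_mul_le [CompleteSpace E] (hφ : IsForwardFlow F φ)
    (hF : ContDiff ℝ 1 F) (hL : LipschitzWith L F) (hT : 0 ≤ T) (hLT : 2 * L * T ≤ 1) :
    HasContinuousFDerivOn φ (Icc 0 T) := by
  have h_fderiv : ∀ z, ∃ Y : ℝ → E →L[ℝ] E, ContinuousOn Y (Icc 0 T) ∧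
      ∀ t ∈ Icc 0 T, HasFDerivAt (φ t) (Y t) z := by
    intro z
    obtain ⟨Y, hY₀, hY⟩ := exists_isIntegralCurveOn_clm_comp hT hLT
      ((hF.continuous_fderiv one_ne_zero).comp_continuousOn (hφ.continuousOn_Icc z T))
      (fun t _ => norm_fderiv_le_of_lipschitz ℝ hL)
    exact ⟨Y, hY.continuousOn, fun t ht =>
      hφ.hasFDerivAt hF hL hY₀ (hY.mono (Icc_subset_Icc_right ht.2)) ht.1⟩
  refine ⟨fun t ht z => ?_, fun z => ?_⟩
  · obtain ⟨Y, -, hY⟩ := h_fderiv z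
    exact (hY t ht).differentiableAt
  · obtain ⟨Y, hYc, hY⟩ := h_fderiv z
    exact hYc.congr fun t ht => (hY t ht).fderiv

theorem hasContinuousFDerivOn_add (hφ : IsForwardFlow F φ) (hL : LipschitzWith L F)
    (hs : 0 ≤ s) (ht : 0 ≤ t) (h_s : HasContinuousFDerivOn φ (Icc 0 s))
    (h_t : HasContinuousFDerivOn φ (Icc 0 t)) : HasContinuousFDerivOn φ (Icc 0 (s + t)) := by
  have h_sub : MapsTo (· - s) (Icc s (s + t)) (Icc 0 t) := fun r hr =>
    ⟨sub_nonneg.2 hr.1, sub_le_iff_le_add'.2 hr.2⟩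
  have h_comp : ∀ r ∈ Icc s (s + t), φ r = φ (r - s) ∘ φ s := fun r hr => by
    funext z
    rw [Function.comp_apply, ← hφ.apply_add hL hs (h_sub hr).1, add_sub_cancel]
  have h_diff_s : Differentiable ℝ (φ s) := h_s.1 s (right_mem_Icc.2 hs)
  rw [← Icc_union_Icc_eq_Icc hs (le_add_of_nonneg_right ht)]
  refine ⟨?_, fun z => (h_s.2 z).union_of_isClosed ?_ isClosed_Icc isClosed_Icc⟩
  · rintro r (hr | hr)
    · exact h_s.1 r hr
    · rw [h_comp r hr]
      exact (h_t.1 _ (h_sub hr)).comp h_diff_s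
  · have h_right : ContinuousOn
        (fun r => (fderiv ℝ (φ (r - s)) (φ s z)).comp (fderiv ℝ (φ s) z)) (Icc s (s + t)) :=
      ((h_t.2 (φ s z)).comp (by fun_prop) h_sub).clm_comp continuousOn_const
    refine h_right.congr fun r hr => ?_
    simp only [h_comp r hr]
    exact fderiv_comp z (h_t.1 _ (h_sub hr) _) (h_diff_s z)

theorem hasContinuousFDerivOn [CompleteSpace E] (hφ : IsForwardFlow F φ) (hF : ContDiff ℝ 1 F)
    (hL : LipschitzWith L F) (hT : 0 ≤ T) : HasContinuousFDerivOn φ (Icc 0 T) := by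
  obtain ⟨k, hk⟩ := exists_nat_ge (2 * L * T)
  set r : ℝ := T / (k + 1)
  have hr : 0 ≤ r := by positivity
  have h_step : HasContinuousFDerivOn φ (Icc 0 r) := by
    refine hφ.hasContinuousFDerivOn_of_mul_le hF hL hr ?_
    rw [mul_div_assoc', div_le_one (by positivity)]
    linarith
  have h_multiple : ∀ m : ℕ, HasContinuousFDerivOn φ (Icc 0 ((m + 1) * r)) := by
    intro m
    induction m with
    | zero => simpa using h_step
    | succ m ih =>
      rw [Nat.cast_succ, add_one_mul (m + 1 : ℝ)]
      exact hφ.hasContinuousFDerivOn_add hL (by positivity) hr ih h_step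
  have h_total : (k + 1) * r = T := mul_div_cancel₀ T (by positivity)
  exact h_total ▸ h_multiple k

end IsForwardFlow

section Integral

variable {Z X : Type*} [NormedAddCommGroup Z] [NormedAddCommGroup X]

theorem abs_norm_sq_sub_norm_sq_le (a b : X) :
    |‖a‖ ^ 2 - ‖b‖ ^ 2| ≤ ‖a - b‖ * (‖a‖ + ‖b‖) := by
  rw [sq_sub_sq, abs_mul, abs_of_nonneg (by positivity : 0 ≤ ‖a‖ + ‖b‖), mul_comm]
  gcongr
  exact abs_norm_sub_norm_le a b

theorem lipschitzOnWith_norm_sq_ball {g : Z → X} {C : ℝ≥0} (hg : LipschitzWith C g)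
    (z₀ : Z) :
    LipschitzOnWith (C * (2 * (‖g z₀‖₊ + C))) (fun z => ‖g z‖ ^ 2) (ball z₀ 1) := by
  have h_bound : ∀ z ∈ ball z₀ 1, ‖g z‖ ≤ ‖g z₀‖ + C := fun z hz => by
    have h_lip : ‖g z - g z₀‖ ≤ C * ‖z - z₀‖ := hg.norm_sub_le z z₀
    have h_near : C * ‖z - z₀‖ ≤ C :=
      mul_le_of_le_one_right C.coe_nonneg (mem_ball_iff_norm.1 hz).le
    linarith [norm_le_norm_sub_add (g z) (g z₀)]
  refine LipschitzOnWith.of_dist_le_mul fun z hz w hw => ?_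
  calc dist (‖g z‖ ^ 2) (‖g w‖ ^ 2) ≤ ‖g z - g w‖ * (‖g z‖ + ‖g w‖) :=
        abs_norm_sq_sub_norm_sq_le _ _
    _ ≤ C * ‖z - w‖ * ((‖g z₀‖ + C) + (‖g z₀‖ + C)) := by
        gcongr
        · exact hg.norm_sub_le z w
        · exact h_bound z hz
        · exact h_bound w hw
    _ = (C * (2 * (‖g z₀‖₊ + C)) : ℝ≥0) * dist z w := by
        push_cast
        rw [dist_eq_norm]
        ring

theorem hasFDerivAt_integral_norm_sq [NormedSpace ℝ Z] [InnerProductSpace ℝ X] {g : ℝ → Z → X}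
    {g' : ℝ → Z →L[ℝ] X} {z₀ : Z} {C : ℝ≥0} {a b : ℝ}
    (h_cont : ∀ z, ContinuousOn (g · z) (uIcc a b))
    (h_lip : ∀ t ∈ uIcc a b, LipschitzWith C (g t)) (hg' : ContinuousOn g' (uIcc a b))
    (h_diff : ∀ t ∈ uIcc a b, HasFDerivAt (g t) (g' t) z₀) :
    HasFDerivAt (fun z => ∫ t in a..b, ‖g t z‖ ^ 2)
      (∫ t in a..b, 2 • (innerSL ℝ (g t z₀)).comp (g' t)) z₀ := by
  have h_sq : ∀ z, ContinuousOn (fun t => ‖g t z‖ ^ 2) (uIcc a b) := fun z =>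
    (h_cont z).norm.pow 2
  have h_sq' : ContinuousOn (fun t => 2 • (innerSL ℝ (g t z₀)).comp (g' t)) (uIcc a b) :=
    (((innerSL ℝ).continuous.comp_continuousOn (h_cont z₀)).clm_comp hg').const_smul 2
  have h_bound : ContinuousOn (fun t => C * (2 * (‖g t z₀‖ + C))) (uIcc a b) :=
    (((h_cont z₀).norm.add continuousOn_const).const_smul (2 : ℝ)).const_smul (C : ℝ)
  refine (intervalIntegral.hasFDerivAt_integral_of_dominated_loc_of_lip (𝕜 := ℝ)
    (F := fun z t => ‖g t z‖ ^ 2) (ball_mem_nhds z₀ one_pos)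
    (Eventually.of_forall fun z =>
      ((h_sq z).mono uIoc_subset_uIcc).aestronglyMeasurable measurableSet_uIoc)
    (h_sq z₀).intervalIntegrable
    ((h_sq'.mono uIoc_subset_uIcc).aestronglyMeasurable measurableSet_uIoc)
    (Eventually.of_forall fun t ht => ?_) h_bound.intervalIntegrable
    (Eventually.of_forall fun t ht => (h_diff t (uIoc_subset_uIcc ht)).norm_sq)).2
  have h_const : Real.nnabs (C * (2 * (‖g t z₀‖ + C))) = C * (2 * (‖g t z₀‖₊ + C)) := by
    ext
    rw [Real.coe_nnabs, abs_of_nonneg (by positivity)]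
    push_cast
    rfl
  rw [h_const]
  exact lipschitzOnWith_norm_sq_ball (h_lip t (uIoc_subset_uIcc ht)) z₀

theorem hasDerivWithinAt_integral_comp_add [NormedSpace ℝ X] [CompleteSpace X] {q : ℝ → X}
    {a b : ℝ} (hq : ContinuousOn q (Ici a)) (hab : a ≤ b) :
    HasDerivWithinAt (fun s => ∫ t in a..b, q (t + s)) (q b - q a) (Ici 0) 0 := by
  -- `p` freezes `q` to the left of `a`, so that it is continuous on the whole line.
  set p : ℝ → X := fun t => q (max t a)
  have hp : Continuous p := hq.comp_continuous (by fun_prop) fun t => le_max_right t a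
  have hpq : EqOn p q (Ici a) := fun t ht => congrArg q (max_eq_left ht)
  have h_ftc : ∀ c, HasDerivAt (fun s => ∫ r in a..c + s, p r) (p c) 0 := fun c => by
    have h := (hp.integral_hasStrictDerivAt a (c + 0)).hasDerivAt.comp_const_add c 0
    rwa [add_zero] at h
  rw [← hpq hab, ← hpq self_mem_Ici]
  refine (((h_ftc b).sub (h_ftc a)).hasDerivWithinAt).congr_of_mem (fun s hs => ?_) self_mem_Ici
  calc ∫ t in a..b, q (t + s) = ∫ t in a..b, p (t + s) :=
        intervalIntegral.integral_congr fun t ht => by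
          rw [uIcc_of_le hab] at ht
          exact (hpq (le_add_of_le_of_nonneg ht.1 hs)).symm
    _ = ∫ r in a + s..b + s, p r := intervalIntegral.integral_comp_add_right p s
    _ = (∫ r in a..b + s, p r) - ∫ r in a..a + s, p r :=
        (intervalIntegral.integral_interval_sub_left (hp.intervalIntegrable _ _)
          (hp.intervalIntegrable _ _)).symm

end Integral

/-- The cost `∫₀ᵀ ‖e (φ t z)‖² dt` of the output `e` along the first `T` time units of the orbit of
`z`; for an output decaying along the flow it serves as a Lyapunov function. -/
noncomputable def flowCost {E X : Type*} [Norm X] (φ : ℝ → E → E) (e : E → X) (T : ℝ) (z : E) : ℝ :=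
  ∫ t in (0 : ℝ)..T, ‖e (φ t z)‖ ^ 2

section FlowCost

variable {E X : Type*} [NormedAddCommGroup E] [NormedSpace ℝ E] [NormedAddCommGroup X]
  {F : E → E} {φ : ℝ → E → E} {e : E → X} {L C : ℝ≥0} {T c : ℝ} {z : E}

theorem intervalIntegrable_norm_sq_output (hφ : IsForwardFlow F φ) (he : Continuous e)
    (hT : 0 ≤ T) (z : E) :
    IntervalIntegrable (fun t => ‖e (φ t z)‖ ^ 2) MeasureTheory.volume 0 T := by
  refine ContinuousOn.intervalIntegrable ?_
  rw [uIcc_of_le hT]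
  exact ((he.comp_continuousOn (hφ.continuousOn_Icc z T)).norm).pow 2

theorem flowCost_le (hφ : IsForwardFlow F φ) (he : Continuous e) (hT : 0 ≤ T)
    (h : ∀ t ∈ Icc 0 T, ‖e (φ t z)‖ ≤ c) : flowCost φ e T z ≤ T * c ^ 2 := by
  have h_mono := intervalIntegral.integral_mono_on hT
    (intervalIntegrable_norm_sq_output hφ he hT z) (intervalIntegrable_const (c := c ^ 2))
    fun t ht => pow_le_pow_left₀ (norm_nonneg _) (h t ht) 2
  simpa only [flowCost, intervalIntegral.integral_const, sub_zero, smul_eq_mul] using h_mono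

theorem le_flowCost (hφ : IsForwardFlow F φ) (he : Continuous e) (hT : 0 ≤ T) (hc : 0 ≤ c)
    (h : ∀ t ∈ Icc 0 T, c ≤ ‖e (φ t z)‖) : T * c ^ 2 ≤ flowCost φ e T z := by
  have h_mono := intervalIntegral.integral_mono_on hT (intervalIntegrable_const (c := c ^ 2))
    (intervalIntegrable_norm_sq_output hφ he hT z)
    fun t ht => pow_le_pow_left₀ hc (h t ht) 2
  simpa only [flowCost, intervalIntegral.integral_const, sub_zero, smul_eq_mul] using h_mono

theorem fderiv_flowCost_apply (hφ : IsForwardFlow F φ) (hL : LipschitzWith L F)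
    (he : Continuous e) (hT : 0 ≤ T) (hW : DifferentiableAt ℝ (flowCost φ e T) z) :
    fderiv ℝ (flowCost φ e T) z (F z) = ‖e (φ T z)‖ ^ 2 - ‖e z‖ ^ 2 := by
  have h_orbit : HasDerivWithinAt (φ · z) (F z) (Ici 0) 0 := by
    simpa only [hφ.apply_zero] using hφ.isIntegralCurveOn z 0 self_mem_Ici
  have h_chain : HasDerivWithinAt (fun s => flowCost φ e T (φ s z))
      (fderiv ℝ (flowCost φ e T) z (F z)) (Ici 0) 0 :=
    hW.hasFDerivAt.comp_hasDerivWithinAt_of_eq 0 h_orbit (hφ.apply_zero z).symm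
  have h_shift : ∀ s ∈ Ici (0 : ℝ),
      flowCost φ e T (φ s z) = ∫ t in (0 : ℝ)..T, ‖e (φ (t + s) z)‖ ^ 2 := fun s hs =>
    intervalIntegral.integral_congr fun t ht => by
      rw [uIcc_of_le hT] at ht
      simp only [add_comm t s, hφ.apply_add hL hs ht.1]
  have h_ftc := hasDerivWithinAt_integral_comp_add (q := fun t => ‖e (φ t z)‖ ^ 2)
    (((he.comp_continuousOn (hφ.continuousOn z)).norm).pow 2) hT
  have h_eq := (uniqueDiffWithinAt_Ici (0 : ℝ)).eq_deriv _ h_chain (h_ftc.congr_of_mem h_shift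
    self_mem_Ici)
  rw [h_eq, hφ.apply_zero]

variable [InnerProductSpace ℝ X] [CompleteSpace E]

theorem hasFDerivAt_flowCost (hφ : IsForwardFlow F φ) (hF : ContDiff ℝ 1 F)
    (hL : LipschitzWith L F) (he : Differentiable ℝ e) (hC : LipschitzWith C e)
    (he' : ContinuousOn (fun t => fderiv ℝ e (φ t z)) (Icc 0 T)) (hT : 0 ≤ T) :
    HasFDerivAt (flowCost φ e T)
      (∫ t in (0 : ℝ)..T, 2 • (innerSL ℝ (e (φ t z))).comp (fderiv ℝ (e ∘ φ t) z)) z := by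
  obtain ⟨hφ_diff, hφ_fderiv⟩ := hφ.hasContinuousFDerivOn hF hL hT
  refine hasFDerivAt_integral_norm_sq (C := C * (exp (L * T)).toNNReal) ?_ ?_ ?_ ?_ <;>
    rw [uIcc_of_le hT]
  · exact fun z => he.continuous.comp_continuousOn (hφ.continuousOn_Icc z T)
  · exact fun t ht => hC.comp (hφ.lipschitzWith hL ht)
  · exact (he'.clm_comp (hφ_fderiv z)).congr fun t ht => fderiv_comp z (he _) (hφ_diff t ht z)
  · exact fun t ht => ((he.comp (hφ_diff t ht)) z).hasFDerivAt

theorem norm_fderiv_flowCost_le (hφ : IsForwardFlow F φ) (hF : ContDiff ℝ 1 F)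
    (hL : LipschitzWith L F) (he : Differentiable ℝ e) (hC : LipschitzWith C e)
    (he' : ContinuousOn (fun t => fderiv ℝ e (φ t z)) (Icc 0 T)) (hT : 0 ≤ T)
    (h : ∀ t ∈ Icc 0 T, ‖e (φ t z)‖ ≤ c) :
    ‖fderiv ℝ (flowCost φ e T) z‖ ≤ 2 * (c * (C * exp (L * T))) * T := by
  rw [(hasFDerivAt_flowCost hφ hF hL he hC he' hT).fderiv]
  refine (intervalIntegral.norm_integral_le_of_norm_le_const fun t ht => ?_).trans_eq
    (by rw [sub_zero, abs_of_nonneg hT])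
  rw [uIoc_of_le hT] at ht
  have ht' : t ∈ Icc 0 T := Ioc_subset_Icc_self ht
  have h_fderiv : ‖fderiv ℝ (e ∘ φ t) z‖ ≤ C * exp (L * T) := by
    simpa only [NNReal.coe_mul, coe_toNNReal _ (exp_pos _).le] using
      norm_fderiv_le_of_lipschitz ℝ (hC.comp (hφ.lipschitzWith hL ht')) (x₀ := z)
  calc ‖2 • (innerSL ℝ (e (φ t z))).comp (fderiv ℝ (e ∘ φ t) z)‖
      ≤ 2 * ‖(innerSL ℝ (e (φ t z))).comp (fderiv ℝ (e ∘ φ t) z)‖ := by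
        simpa using norm_nsmul_le (n := 2)
          (a := (innerSL ℝ (e (φ t z))).comp (fderiv ℝ (e ∘ φ t) z))
    _ ≤ 2 * (‖e (φ t z)‖ * ‖fderiv ℝ (e ∘ φ t) z‖) := by
        gcongr
        simpa only [innerSL_apply_norm] using
          ContinuousLinearMap.opNorm_comp_le (innerSL ℝ (e (φ t z))) (fderiv ℝ (e ∘ φ t) z)
    _ ≤ 2 * (c * (C * exp (L * T))) := by
        have hc : 0 ≤ c := (norm_nonneg _).trans (h t ht')
        gcongr
        exact h t ht'

end FlowCost

theorem exists_pos_sq_mul_exp_le_half (K : ℝ) {τ : ℝ} (hτ : 0 < τ) :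
    ∃ T > 0, (K * exp (-τ * T)) ^ 2 ≤ 1 / 2 := by
  have h_lim : Tendsto (fun T => (K * exp (-τ * T)) ^ 2) atTop (𝓝 ((K * 0) ^ 2)) :=
    ((tendsto_exp_atBot.comp
      (tendsto_id.const_mul_atTop_of_neg (neg_neg_of_pos hτ))).const_mul K).pow 2
  have h_small : ∀ᶠ T in atTop, (K * exp (-τ * T)) ^ 2 < 1 / 2 :=
    h_lim.eventually_lt_const (by norm_num)
  obtain ⟨T, hT, hT_pos⟩ := (h_small.and (eventually_gt_atTop 0)).exists
  exact ⟨T, hT_pos, hT.le⟩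

theorem exists_lyapunov_of_isForwardFlow {E X : Type*} [NormedAddCommGroup E] [NormedSpace ℝ E]
    [CompleteSpace E] [NormedAddCommGroup X] [InnerProductSpace ℝ X] {F : E → E} {φ : ℝ → E → E}
    {e : E → X} {L C M : ℝ≥0} {K τ : ℝ} (hφ : IsForwardFlow F φ) (hF : ContDiff ℝ 1 F)
    (hL : LipschitzWith L F) (he : Differentiable ℝ e) (hC : LipschitzWith C e) (hC₀ : 0 < C)
    (he' : ∀ z, ContinuousOn (fun t => fderiv ℝ e (φ t z)) (Ici 0)) (hK : 0 < K) (hτ : 0 < τ)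
    (h_lower : ∀ z, ∀ t ≥ 0, exp (-M * t) * ‖e z‖ ≤ ‖e (φ t z)‖)
    (h_upper : ∀ z, ∀ t ≥ 0, ‖e (φ t z)‖ ≤ K * ‖e z‖ * exp (-τ * t)) :
    ∃ (W : E → ℝ) (α β γ ζ : ℝ), 0 < α ∧ 0 < β ∧ 0 < γ ∧ 0 < ζ ∧ Differentiable ℝ W ∧
      ∀ z, α * ‖e z‖ ^ 2 ≤ W z ∧ W z ≤ β * ‖e z‖ ^ 2 ∧
        fderiv ℝ W z (F z) ≤ -γ * ‖e z‖ ^ 2 ∧ ‖fderiv ℝ W z‖ ≤ ζ * ‖e z‖ := by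
  obtain ⟨T, hT, hKT⟩ := exists_pos_sq_mul_exp_le_half K hτ
  have he'T : ∀ z, ContinuousOn (fun t => fderiv ℝ e (φ t z)) (Icc 0 T) := fun z =>
    (he' z).mono Icc_subset_Ici_self
  have h_diff : Differentiable ℝ (flowCost φ e T) := fun z =>
    (hasFDerivAt_flowCost hφ hF hL he hC (he'T z) hT.le).differentiableAt
  have h_lowerT : ∀ z, ∀ t ∈ Icc 0 T, exp (-M * T) * ‖e z‖ ≤ ‖e (φ t z)‖ := fun z t ht => by
    refine le_trans ?_ (h_lower z t ht.1)
    gcongr exp ?_ * _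
    exact mul_le_mul_of_nonpos_left ht.2 (neg_nonpos.2 M.coe_nonneg)
  have h_upperT : ∀ z, ∀ t ∈ Icc 0 T, ‖e (φ t z)‖ ≤ K * ‖e z‖ := fun z t ht =>
    (h_upper z t ht.1).trans <| mul_le_of_le_one_right (by positivity) <|
      exp_le_one_iff.2 (mul_nonpos_of_nonpos_of_nonneg (neg_nonpos.2 hτ.le) ht.1)
  refine ⟨flowCost φ e T, T * exp (-M * T) ^ 2, T * K ^ 2, 1 / 2, 2 * (K * (C * exp (L * T))) * T,
    by positivity, by positivity, by positivity, by positivity, h_diff, fun z => ⟨?_, ?_, ?_, ?_⟩⟩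
  · rw [mul_assoc, ← mul_pow]
    exact le_flowCost hφ he.continuous hT.le (by positivity) (h_lowerT z)
  · rw [mul_assoc, ← mul_pow]
    exact flowCost_le hφ he.continuous hT.le (h_upperT z)
  · have h_decay : ‖e (φ T z)‖ ^ 2 ≤ 1 / 2 * ‖e z‖ ^ 2 :=
      calc ‖e (φ T z)‖ ^ 2 ≤ (K * ‖e z‖ * exp (-τ * T)) ^ 2 := by
            gcongr
            exact h_upper z T hT.le
        _ = (K * exp (-τ * T)) ^ 2 * ‖e z‖ ^ 2 := by ring
        _ ≤ 1 / 2 * ‖e z‖ ^ 2 := by gcongr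
    rw [fderiv_flowCost_apply hφ hL he.continuous hT.le (h_diff z)]
    linarith
  · refine (norm_fderiv_flowCost_le hφ hF hL he hC (he'T z) hT.le (h_upperT z)).trans_eq ?_
    ring

section Plant

variable {X U : Type*} [NormedAddCommGroup X] [NormedAddCommGroup U]
  {f : X → U → X} {h : U → X} {ℓx ℓu ℓ : ℝ≥0}

/-- The vector field `(f(x,u), 0)` of the plant `ẋ = f(x,u)` augmented by `u̇ = 0`, which turns the
input into part of the state. -/
def augmentedField (f : X → U → X) (z : X × U) : X × U :=
  (f z.1 z.2, 0)

/-- The deviation `x - h(u)` of the augmented state `(x,u)` from the steady state of its input. -/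
def deviation (h : U → X) (z : X × U) : X :=
  z.1 - h z.2

theorem lipschitzWith_augmentedField (hfx : ∀ u, LipschitzWith ℓx (f · u))
    (hfu : ∀ x, LipschitzWith ℓu (f x)) : LipschitzWith (ℓx + ℓu) (augmentedField f) := by
  simpa only [max_eq_left zero_le, augmentedField] using!
    (LipschitzWith.uncurry hfx hfu).prodMk (LipschitzWith.const 0)

theorem lipschitzWith_deviation (hh : LipschitzWith ℓ h) :
    LipschitzWith (1 + ℓ) (deviation h) := by
  simpa only [mul_one] using! LipschitzWith.prod_fst.sub (hh.comp LipschitzWith.prod_snd)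

variable [NormedSpace ℝ X] [NormedSpace ℝ U]

theorem contDiff_augmentedField {n : WithTop ℕ∞} (hf : ContDiff ℝ n (Function.uncurry f)) :
    ContDiff ℝ n (augmentedField f) :=
  hf.prodMk contDiff_const

theorem isForwardFlow_augmentedField {γ : X → U → ℝ → X} (hγ₀ : ∀ x u, γ x u 0 = x)
    (hγ : ∀ x u, IsIntegralCurveOn (γ x u) (fun _ y => f y u) (Ici 0)) :
    IsForwardFlow (augmentedField f) (fun t z => (γ z.1 z.2 t, z.2)) where
  apply_zero z := Prod.ext (hγ₀ z.1 z.2) rfl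
  isIntegralCurveOn z t ht := (hγ z.1 z.2 t ht).prodMk (hasDerivWithinAt_const t (Ici 0) z.2)

-- The derivative depends on the input alone, hence it is constant along the augmented flow.
theorem hasFDerivAt_deviation (hh : Differentiable ℝ h) (z : X × U) :
    HasFDerivAt (deviation h)
      (.fst ℝ X U - (fderiv ℝ h z.2).comp (.snd ℝ X U)) z :=
  hasFDerivAt_fst.sub ((hh z.2).hasFDerivAt.comp z hasFDerivAt_snd)

end Plant

section Gradient

variable {X U : Type*} [NormedAddCommGroup X] [NormedAddCommGroup U]
  {G : X × U → ℝ} {x : X} {u : U}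

theorem inner_gradient_fst [InnerProductSpace ℝ X] [CompleteSpace X] [NormedSpace ℝ U]
    (hG : DifferentiableAt ℝ G (x, u)) (v : X) :
    ⟪gradient (fun y => G (y, u)) x, v⟫ = fderiv ℝ G (x, u) (v, 0) := by
  have h_fst : HasFDerivAt (fun y => G (y, u)) ((fderiv ℝ G (x, u)).comp (.inl ℝ X U)) x :=
    hG.hasFDerivAt.comp x (hasFDerivAt_prodMk_left x u)
  rw [inner_gradient_left, h_fst.fderiv]
  rfl

theorem norm_gradient_snd_le [NormedSpace ℝ X] [InnerProductSpace ℝ U] [CompleteSpace U]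
    (hG : DifferentiableAt ℝ G (x, u)) :
    ‖gradient (fun v => G (x, v)) u‖ ≤ ‖fderiv ℝ G (x, u)‖ := by
  have h_snd : HasFDerivAt (fun v => G (x, v)) ((fderiv ℝ G (x, u)).comp (.inr ℝ X U)) u :=
    hG.hasFDerivAt.comp u (hasFDerivAt_prodMk_right x u)
  rw [gradient, LinearIsometryEquiv.norm_map, h_snd.fderiv]
  exact (ContinuousLinearMap.opNorm_comp_le _ _).trans
    (mul_le_of_le_one_right (norm_nonneg _) (ContinuousLinearMap.norm_inr_le_one ℝ X U))

end Gradient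

theorem stmt0_general {X U : Type*} [NormedAddCommGroup X] [InnerProductSpace ℝ X]
    [CompleteSpace X] [NormedAddCommGroup U] [InnerProductSpace ℝ U] [CompleteSpace U]
    {f : X → U → X} {h : U → X} {ℓx ℓu ℓ : ℝ≥0} {K τ : ℝ} (hK : 0 < K) (hτ : 0 < τ)
    (hf_smooth : ContDiff ℝ 1 (Function.uncurry f))
    (hf_lipx : ∀ u, LipschitzWith ℓx (fun x => f x u))
    (hf_lipu : ∀ x, LipschitzWith ℓu (fun u => f x u))
    (hh_diff : Differentiable ℝ h) (hh_lip : LipschitzWith ℓ h) (hsteady : ∀ u, f (h u) u = 0)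
    (hsol : ∀ x₀ u, ∃ x : ℝ → X, x 0 = x₀ ∧ IsIntegralCurveOn x (fun _ y => f y u) (Ici 0) ∧
      ∀ t ≥ 0, ‖x t - h u‖ ≤ K * ‖x₀ - h u‖ * exp (-τ * t)) :
    ∃ (W : X → U → ℝ) (α β γ ζ : ℝ), 0 < α ∧ 0 < β ∧ 0 < γ ∧ 0 < ζ ∧
      Differentiable ℝ (Function.uncurry W) ∧
      ∀ x u, α * ‖x - h u‖ ^ 2 ≤ W x u ∧ W x u ≤ β * ‖x - h u‖ ^ 2 ∧
        ⟪gradient (fun y => W y u) x, f x u⟫ ≤ -γ * ‖x - h u‖ ^ 2 ∧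
        ‖gradient (fun v => W x v) u‖ ≤ ζ * ‖x - h u‖ := by
  choose γ hγ₀ hγ hγ_decay using hsol
  have h_fderiv : ∀ z : X × U,
      ContinuousOn (fun t => fderiv ℝ (deviation h) (γ z.1 z.2 t, z.2)) (Ici 0) := fun z => by
    simp only [(hasFDerivAt_deviation hh_diff _).fderiv]
    exact continuousOn_const
  have h_lower : ∀ z : X × U, ∀ t ≥ 0,
      exp (-ℓx * t) * ‖deviation h z‖ ≤ ‖deviation h (γ z.1 z.2 t, z.2)‖ := fun z t ht => by
    simpa only [hγ₀] using! exp_mul_norm_sub_le_of_isIntegralCurveOn (hf_lipx z.2)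
      (hsteady z.2) (hγ z.1 z.2) ht
  obtain ⟨W, α, β, c, ζ, hα, hβ, hc, hζ, hW, hW_bounds⟩ := exists_lyapunov_of_isForwardFlow
    (isForwardFlow_augmentedField hγ₀ hγ) (contDiff_augmentedField hf_smooth)
    (lipschitzWith_augmentedField hf_lipx hf_lipu)
    (fun z => (hasFDerivAt_deviation hh_diff z).differentiableAt)
    (lipschitzWith_deviation hh_lip) (by positivity) h_fderiv hK hτ h_lower
    (fun z => hγ_decay z.1 z.2)
  refine ⟨fun x u => W (x, u), α, β, c, ζ, hα, hβ, hc, hζ, hW, fun x u => ?_⟩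
  obtain ⟨hW_lower, hW_upper, hW_deriv, hW_norm⟩ := hW_bounds (x, u)
  rw [inner_gradient_fst (hW (x, u))]
  exact ⟨hW_lower, hW_upper, hW_deriv, (norm_gradient_snd_le (hW (x, u))).trans hW_norm⟩

/-- Converse Lyapunov theorem for an exponentially stable plant `ẋ = f(x,u)`
with steady-state map `h`. -/
theorem stmt0 {n p : ℕ}
    (f : EuclideanSpace ℝ (Fin n) → EuclideanSpace ℝ (Fin p) → EuclideanSpace ℝ (Fin n))
    (h : EuclideanSpace ℝ (Fin p) → EuclideanSpace ℝ (Fin n))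
    (ℓx ℓu ℓ : ℝ≥0) (K τ : ℝ)
    (hℓx : 0 < ℓx) (hℓu : 0 < ℓu) (hℓ : 0 < ℓ) (hK : 0 < K) (hτ : 0 < τ)
    (hf_smooth : ContDiff ℝ 1 (Function.uncurry f))
    (hf_lipx : ∀ u, LipschitzWith ℓx (fun x => f x u))
    (hf_lipu : ∀ x, LipschitzWith ℓu (fun u => f x u))
    (hh_diff : Differentiable ℝ h)
    (hh_lip : LipschitzWith ℓ h)
    (hsteady : ∀ u, f (h u) u = 0)
    (hexist : ∀ (x₀ : EuclideanSpace ℝ (Fin n)) (uh : EuclideanSpace ℝ (Fin p)),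
      ∃ x : ℝ → EuclideanSpace ℝ (Fin n),
        x 0 = x₀ ∧ ∀ t ≥ (0 : ℝ), HasDerivAt x (f (x t) uh) t)
    (hdecay : ∀ (uh : EuclideanSpace ℝ (Fin p)) (x : ℝ → EuclideanSpace ℝ (Fin n)),
      (∀ t ≥ (0 : ℝ), HasDerivAt x (f (x t) uh) t) →
      ∀ t ≥ (0 : ℝ), ‖x t - h uh‖ ≤ K * ‖x 0 - h uh‖ * Real.exp (-τ * t)) :
    ∃ (W : EuclideanSpace ℝ (Fin n) → EuclideanSpace ℝ (Fin p) → ℝ) (α β γ ζ : ℝ),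
      0 < α ∧ 0 < β ∧ 0 < γ ∧ 0 < ζ ∧
      Differentiable ℝ (Function.uncurry W) ∧
      ∀ x u,
        α * ‖x - h u‖ ^ 2 ≤ W x u ∧
        W x u ≤ β * ‖x - h u‖ ^ 2 ∧
        ⟪gradient (fun y => W y u) x, f x u⟫ ≤ -γ * ‖x - h u‖ ^ 2 ∧
        ‖gradient (fun v => W x v) u‖ ≤ ζ * ‖x - h u‖ := by
  refine stmt0_general hK hτ hf_smooth hf_lipx hf_lipu hh_diff hh_lip hsteady fun x₀ u => ?_
  obtain ⟨x, rfl, hx⟩ := hexist x₀ u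
  exact ⟨x, rfl, fun t ht => (hx t ht).hasDerivWithinAt, hdecay u x hx⟩
end

section
/- Let Φ̃ : ℝᵖ → ℝ be continuously differentiable with locally Lipschitz gradient and compact sublevel sets, and let Q be a locally Lipschitz map assigning to each u ∈ ℝᵖ a symmetric positive definite linear map Q(u) : ℝᵖ → ℝᵖ. Then for every complete solution u : [0,∞) → ℝᵖ of the gradient flow u̇ = −Q(u)∇Φ̃(u), the function t ↦ Φ̃(u(t)) is nonincreasing, the trajectory remains in the sublevel set {w : Φ̃(w) ≤ Φ̃(u(0))}, and dist(u(t), {w ∈ ℝᵖ : ∇Φ̃(w) = 0}) → 0 as t → ∞. -/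
/-!
Along a solution, `Φ̃` decreases at the rate `W(u) = ⟪Q(u)∇Φ̃(u), ∇Φ̃(u)⟫`, so the trajectory
stays in the compact set `{Φ̃ ≤ Φ̃(u(0))}`, where it has bounded velocity; hence `t ↦ W(u(t))` is
uniformly continuous. Since `Φ̃(u(t))` converges, Barbalat's lemma gives `W(u(t)) → 0`, and by
compactness the trajectory approaches the zero set of `W`, which consists of the critical points
of `Φ̃`.
-/

open Filter Metric Real
open scoped RealInnerProductSpace Topology

section Barbalat

variable {E : Type*} [NormedAddCommGroup E] [NormedSpace ℝ E] {F f : ℝ → E} {a b : ℝ}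

theorem norm_image_sub_sub_smul_le_of_norm_deriv_sub_le {c : E} {C : ℝ} (hab : a ≤ b)
    (hF : ∀ x ∈ Set.Icc a b, HasDerivWithinAt F (f x) (Set.Icc a b) x)
    (hf : ∀ x ∈ Set.Icc a b, ‖f x - c‖ ≤ C) :
    ‖F b - F a - (b - a) • c‖ ≤ C * (b - a) := by
  have hderiv : ∀ x ∈ Set.Icc a b,
      HasDerivWithinAt (fun y => F y - y • c) (f x - c) (Set.Icc a b) x := fun x hx => by
    simpa only [one_smul, id] using
      (hF x hx).fun_sub ((hasDerivWithinAt_id x _).smul_const c)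
  have hbound := norm_image_sub_le_of_norm_deriv_le_segment' hderiv
    (fun x hx => hf x (Set.Ico_subset_Icc_self hx)) b (Set.right_mem_Icc.2 hab)
  rwa [show F b - b • c - (F a - a • c) = F b - F a - (b - a) • c by module] at hbound

/-- Barbalat's lemma. The increment of `F` over a window of fixed length `δ` tends to `0`, and for
small `δ` uniform continuity keeps it within `ε * δ` of `δ • f t`. -/
theorem tendsto_zero_of_tendsto_of_uniformContinuousOn_deriv {l : E}
    (hF : ∀ t ∈ Set.Ici a, HasDerivWithinAt F (f t) (Set.Ici a) t)
    (hf : UniformContinuousOn f (Set.Ici a)) (hl : Tendsto F atTop (𝓝 l)) :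
    Tendsto f atTop (𝓝 0) := by
  rw [Metric.tendsto_nhds]
  intro ε hε
  obtain ⟨δ, hδ, hosc⟩ := Metric.uniformContinuousOn_iff_le.1 hf (ε / 2) (half_pos hε)
  have hincr : Tendsto (fun t => F (t + δ) - F t) atTop (𝓝 0) := by
    simpa only [sub_self, Function.comp_def, id] using
      (hl.comp (tendsto_atTop_add_const_right atTop δ tendsto_id)).sub hl
  filter_upwards [(tendsto_zero_iff_norm_tendsto_zero.1 hincr).eventually_lt_const
    (show 0 < ε / 2 * δ by positivity), eventually_ge_atTop a] with t hsmall hat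
  have hsub : Set.Icc t (t + δ) ⊆ Set.Ici a := fun x hx => hat.trans hx.1
  have hmean : ‖F (t + δ) - F t - δ • f t‖ ≤ ε / 2 * δ := by
    simpa only [add_sub_cancel_left] using
      norm_image_sub_sub_smul_le_of_norm_deriv_sub_le (le_add_of_nonneg_right hδ.le)
        (fun x hx => (hF x (hsub hx)).mono hsub) fun x hx => by
          rw [← dist_eq_norm]
          refine hosc x (hsub hx) t hat ?_
          rw [Real.dist_eq, abs_of_nonneg (sub_nonneg.2 hx.1)]
          linarith [hx.2]
  have hscaled : δ * ‖f t‖ < δ * ε := calc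
    δ * ‖f t‖ = ‖δ • f t‖ := by rw [norm_smul, Real.norm_of_nonneg hδ.le]
    _ ≤ ‖F (t + δ) - F t‖ + ‖F (t + δ) - F t - δ • f t‖ := norm_le_norm_add_norm_sub _ _
    _ < ε / 2 * δ + ε / 2 * δ := add_lt_add_of_lt_of_le hsmall hmean
    _ = δ * ε := by ring
  rw [dist_zero_right]
  exact lt_of_mul_lt_mul_left hscaled hδ.le

end Barbalat

theorem tendsto_infDist_zero_of_isCompact {ι X Y : Type*} [PseudoMetricSpace X]
    [TopologicalSpace Y] [T2Space Y] {l : Filter ι} {x : ι → X} {K S : Set X} {W : X → Y} {c : Y}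
    (hK : IsCompact K) (hW : ContinuousOn W K) (hS : ∀ w ∈ K, W w = c → w ∈ S)
    (hx : ∀ᶠ i in l, x i ∈ K) (hlim : Tendsto (fun i => W (x i)) l (𝓝 c)) :
    Tendsto (fun i => infDist (x i) S) l (𝓝 0) := by
  rw [Metric.tendsto_nhds]
  intro ε hε
  have hfar : IsCompact (K ∩ {w | ε ≤ infDist w S}) :=
    hK.inter_right (isClosed_le continuous_const (continuous_infDist_pt S))
  have hc : c ∉ W '' (K ∩ {w | ε ≤ infDist w S}) := by
    rintro ⟨w, ⟨hwK, hw⟩, hwc⟩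
    exact hε.not_ge (hw.trans_eq (infDist_zero_of_mem (hS w hwK hwc)))
  have hopen := (hfar.image_of_continuousOn (hW.mono Set.inter_subset_left)).isClosed.isOpen_compl
  filter_upwards [hx, hlim (hopen.mem_nhds hc)] with i hiK hi
  rw [Real.dist_0_eq_abs, abs_of_nonneg infDist_nonneg]
  exact lt_of_not_ge fun hge => hi (Set.mem_image_of_mem W ⟨hiK, hge⟩)

theorem tendsto_atTop_ciInf_of_antitoneOn_Ici {ι α : Type*} [SemilatticeSup ι]
    [ConditionallyCompleteLattice α] [TopologicalSpace α] [InfConvergenceClass α] {f : ι → α}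
    {a : ι} (hf : AntitoneOn f (Set.Ici a)) (hbdd : BddBelow (f '' Set.Ici a)) :
    Tendsto f atTop (𝓝 (⨅ t : Set.Ici a, f t)) := by
  rw [Set.image_eq_range] at hbdd
  exact tendsto_comp_val_Ici_atTop.1
    (tendsto_atTop_ciInf (fun x y hxy => hf x.2 y.2 hxy) hbdd)

section Lyapunov

variable {E : Type*} [NormedAddCommGroup E] [NormedSpace ℝ E]
  {V : E → ℝ} {v : E → E} {u : ℝ → E} {s : Set ℝ} {K S : Set E}

theorem uniformContinuousOn_of_isIntegralCurveOn_of_mapsTo (hs : Convex ℝ s)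
    (hu : IsIntegralCurveOn u (fun _ => v) s) (hK : IsCompact K) (hv : ContinuousOn v K)
    (huK : Set.MapsTo u s K) : UniformContinuousOn u s := by
  obtain ⟨M, hM⟩ := hK.exists_bound_of_continuousOn hv
  exact (LipschitzOnWith.of_dist_le' fun x hx y hy => by
    simpa only [dist_eq_norm] using hs.norm_image_sub_le_of_norm_hasDerivWithin_le hu
      (fun t ht => hM _ (huK ht)) hy hx).uniformContinuousOn

/-- The derivative of `V` along the vector field `v`, that is, the rate of change of `V` along the
integral curves of `v`. Lyapunov functions are those for which it is nonpositive. -/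
noncomputable def orbitalDeriv (V : E → ℝ) (v : E → E) (w : E) : ℝ :=
  fderiv ℝ V w (v w)

theorem continuousOn_orbitalDeriv (hV : ContDiff ℝ 1 V) (hv : ContinuousOn v K) :
    ContinuousOn (orbitalDeriv V v) K :=
  (hV.continuous_fderiv one_ne_zero).continuousOn.clm_apply hv

theorem hasDerivWithinAt_comp_of_isIntegralCurveOn (hV : Differentiable ℝ V)
    (hu : IsIntegralCurveOn u (fun _ => v) s) {t : ℝ} (ht : t ∈ s) :
    HasDerivWithinAt (fun t => V (u t)) (orbitalDeriv V v (u t)) s t :=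
  (hV (u t)).hasFDerivAt.comp_hasDerivWithinAt t (hu t ht)

theorem antitoneOn_comp_of_orbitalDeriv_nonpos (hV : Differentiable ℝ V) (hs : Convex ℝ s)
    (hu : IsIntegralCurveOn u (fun _ => v) s) (hVv : ∀ t ∈ s, orbitalDeriv V v (u t) ≤ 0) :
    AntitoneOn (fun t => V (u t)) s :=
  antitoneOn_of_hasDerivWithinAt_nonpos hs (hV.continuous.comp_continuousOn hu.continuousOn)
    (fun _ ht => (hasDerivWithinAt_comp_of_isIntegralCurveOn hV hu (interior_subset ht)).mono
      interior_subset)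
    fun t ht => hVv t (interior_subset ht)

variable {a : ℝ}

theorem tendsto_orbitalDeriv_zero_of_mapsTo_isCompact (hV : ContDiff ℝ 1 V)
    (hu : IsIntegralCurveOn u (fun _ => v) (Set.Ici a)) (hK : IsCompact K)
    (huK : Set.MapsTo u (Set.Ici a) K) (hv : ContinuousOn v K)
    (hVv : ∀ w ∈ K, orbitalDeriv V v w ≤ 0) :
    Tendsto (fun t => orbitalDeriv V v (u t)) atTop (𝓝 0) := by
  have hVd : Differentiable ℝ V := hV.differentiable one_ne_zero
  have hanti : AntitoneOn (fun t => V (u t)) (Set.Ici a) :=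
    antitoneOn_comp_of_orbitalDeriv_nonpos hVd (convex_Ici a) hu fun t ht => hVv _ (huK ht)
  have hbdd : BddBelow ((fun t => V (u t)) '' Set.Ici a) :=
    (hK.bddBelow_image hV.continuous.continuousOn).mono <| by
      rintro _ ⟨t, ht, rfl⟩
      exact Set.mem_image_of_mem V (huK ht)
  have hunif : UniformContinuousOn (fun t => orbitalDeriv V v (u t)) (Set.Ici a) :=
    (hK.uniformContinuousOn_of_continuous (continuousOn_orbitalDeriv hV hv)).comp
      (uniformContinuousOn_of_isIntegralCurveOn_of_mapsTo (convex_Ici a) hu hK hv huK) huK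
  exact tendsto_zero_of_tendsto_of_uniformContinuousOn_deriv
    (fun _ ht => hasDerivWithinAt_comp_of_isIntegralCurveOn hVd hu ht) hunif
    (tendsto_atTop_ciInf_of_antitoneOn_Ici hanti hbdd)

theorem tendsto_infDist_zero_of_orbitalDeriv_nonpos (hV : ContDiff ℝ 1 V)
    (hu : IsIntegralCurveOn u (fun _ => v) (Set.Ici a)) (hK : IsCompact K)
    (huK : Set.MapsTo u (Set.Ici a) K) (hv : ContinuousOn v K)
    (hVv : ∀ w ∈ K, orbitalDeriv V v w ≤ 0) (hS : ∀ w ∈ K, orbitalDeriv V v w = 0 → w ∈ S) :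
    Tendsto (fun t => infDist (u t) S) atTop (𝓝 0) :=
  tendsto_infDist_zero_of_isCompact hK (continuousOn_orbitalDeriv hV hv) hS
    ((eventually_ge_atTop a).mono huK)
    (tendsto_orbitalDeriv_zero_of_mapsTo_isCompact hV hu hK huK hv hVv)

end Lyapunov

section GradientFlow

variable {E : Type*} [NormedAddCommGroup E] [InnerProductSpace ℝ E] [CompleteSpace E]
  {Φ : E → ℝ} {Q : E → E →L[ℝ] E}

theorem continuous_gradient (hΦ : ContDiff ℝ 1 Φ) : Continuous (gradient Φ) :=
  (InnerProductSpace.toDual ℝ E).symm.continuous.comp (hΦ.continuous_fderiv one_ne_zero)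

theorem orbitalDeriv_neg_apply_gradient (w : E) :
    orbitalDeriv Φ (fun w => -(Q w (gradient Φ w))) w = -⟪Q w (gradient Φ w), gradient Φ w⟫ := by
  rw [orbitalDeriv, ← inner_gradient_left, inner_neg_right, real_inner_comm]

theorem orbitalDeriv_neg_apply_gradient_nonpos (hQ_pos : ∀ w x, x ≠ 0 → 0 < ⟪Q w x, x⟫) (w : E) :
    orbitalDeriv Φ (fun w => -(Q w (gradient Φ w))) w ≤ 0 := by
  rw [orbitalDeriv_neg_apply_gradient, neg_nonpos]
  obtain hzero | hne := eq_or_ne (gradient Φ w) 0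
  · rw [hzero, inner_zero_right]
  · exact (hQ_pos w _ hne).le

theorem gradient_eq_zero_of_orbitalDeriv_eq_zero (hQ_pos : ∀ w x, x ≠ 0 → 0 < ⟪Q w x, x⟫) {w : E}
    (hw : orbitalDeriv Φ (fun w => -(Q w (gradient Φ w))) w = 0) : gradient Φ w = 0 := by
  rw [orbitalDeriv_neg_apply_gradient, neg_eq_zero] at hw
  by_contra hne
  exact (hQ_pos w _ hne).ne' hw

/-- The critical set is nonempty, since `Φ` attains its minimum on the compact sublevel set; the
limit does not rest on the convention `infDist x ∅ = 0`. -/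
theorem stmt1_general (hΦ : ContDiff ℝ 1 Φ) (hQ : Continuous Q)
    (hQ_pos : ∀ w x, x ≠ 0 → 0 < ⟪Q w x, x⟫) {u : ℝ → E}
    (hlevel : IsCompact {w | Φ w ≤ Φ (u 0)})
    (hu : IsIntegralCurveOn u (fun _ w => -(Q w (gradient Φ w))) (Set.Ici 0)) :
    AntitoneOn (fun t => Φ (u t)) (Set.Ici 0) ∧
    Set.MapsTo u (Set.Ici 0) {w | Φ w ≤ Φ (u 0)} ∧
    Tendsto (fun t => infDist (u t) {w | gradient Φ w = 0}) atTop (𝓝 0) := by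
  have hanti : AntitoneOn (fun t => Φ (u t)) (Set.Ici 0) :=
    antitoneOn_comp_of_orbitalDeriv_nonpos (hΦ.differentiable one_ne_zero) (convex_Ici 0) hu
      fun t _ => orbitalDeriv_neg_apply_gradient_nonpos hQ_pos (u t)
  have hmaps : Set.MapsTo u (Set.Ici 0) {w | Φ w ≤ Φ (u 0)} :=
    fun _ ht => hanti Set.self_mem_Ici ht ht
  have hfield : Continuous fun w => -(Q w (gradient Φ w)) :=
    (hQ.clm_apply (continuous_gradient hΦ)).neg
  exact ⟨hanti, hmaps, tendsto_infDist_zero_of_orbitalDeriv_nonpos hΦ hu hlevel hmaps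
    hfield.continuousOn (fun w _ => orbitalDeriv_neg_apply_gradient_nonpos hQ_pos w)
    fun _ _ => gradient_eq_zero_of_orbitalDeriv_eq_zero hQ_pos⟩

end GradientFlow

/-- Convergence of variable-metric gradient flows `u̇ = -Q(u)∇Φ̃(u)`. -/
theorem stmt1 {p : ℕ}
    (Φ : EuclideanSpace ℝ (Fin p) → ℝ)
    (hΦ : ContDiff ℝ 1 Φ)
    (hgrad_lip : LocallyLipschitz (gradient Φ))
    (hlevel : ∀ c : ℝ, IsCompact {w : EuclideanSpace ℝ (Fin p) | Φ w ≤ c})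
    (Q : EuclideanSpace ℝ (Fin p) → EuclideanSpace ℝ (Fin p) →L[ℝ] EuclideanSpace ℝ (Fin p))
    (hQ_lip : LocallyLipschitz Q)
    (hQ_symm : ∀ u v w, ⟪Q u v, w⟫ = ⟪v, Q u w⟫)
    (hQ_pos : ∀ u v, v ≠ 0 → 0 < ⟪Q u v, v⟫)
    (u : ℝ → EuclideanSpace ℝ (Fin p))
    (hsol : ∀ t ≥ (0 : ℝ), HasDerivAt u (-(Q (u t) (gradient Φ (u t)))) t) :
    (∀ s t : ℝ, 0 ≤ s → s ≤ t → Φ (u t) ≤ Φ (u s)) ∧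
    (∀ t ≥ (0 : ℝ), Φ (u t) ≤ Φ (u 0)) ∧
    Tendsto (fun t => Metric.infDist (u t) {w | gradient Φ w = 0}) atTop (nhds 0) := by
  obtain ⟨hanti, hmaps, hconv⟩ := stmt1_general hΦ hQ_lip.continuous hQ_pos (hlevel _)
    fun t ht => (hsol t ht).hasDerivWithinAt
  exact ⟨fun s t hs hst => hanti hs (hs.trans hst) hst, fun t ht => hmaps ht, hconv⟩
end

section
/- Let f : ℝⁿ × ℝᵖ → ℝⁿ be continuously differentiable with differentiable ℓ-Lipschitz steady-state map h (f(h(u),u) = 0 for all u), and suppose W : ℝⁿ × ℝᵖ → ℝ is a differentiable Lyapunov function with constants α, β, γ, ζ > 0 satisfying α‖x−h(u)‖² ≤ W(x,u) ≤ β‖x−h(u)‖², ⟨∇ₓW(x,u), f(x,u)⟩ ≤ −γ‖x−h(u)‖², and ‖∇ᵤW(x,u)‖ ≤ ζ‖x−h(u)‖ for all (x,u). Let Φ : ℝⁿ × ℝᵖ → ℝ be continuously differentiable such that u ↦ Φ(h(u),u) has compact sublevel sets and there is L > 0 with ‖H(u)ᵀ(∇Φ(x',u) − ∇Φ(x,u))‖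 ≤ L‖x' − x‖ for all x, x', u. Let Q be a locally Lipschitz metric of symmetric positive definite maps Q(u) with sup_u ‖Q(u)‖ < γ/(ζL). Then every complete solution (x,u) : [0,∞) → ℝⁿ × ℝᵖ of ẋ = f(x,u), u̇ = −Q(u)H(u)ᵀ∇Φ(x,u) converges to the set of critical points, i.e. dist((x(t),u(t)), {(x,u) : x = h(u) and H(u)ᵀ∇Φ(x,u) = 0}) → 0 as t → ∞. -/
/-!
The composite function `Ψ(x, u) = Φ(h(u), u) + (L / ζ) W(x, u)` is a Lyapunov function: along a
solution its two cross terms, each bounded by `L ‖x - h(u)‖ ‖u̇‖`, are absorbed by the decay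
`(L γ / ζ) ‖x - h(u)‖²` of the plant and the decay `⟪Q g, g⟫ ≥ ‖Q g‖² / q` of the gradient step
precisely when `q < γ / (ζ L)`. Its sublevel sets are compact, so a Barbalat argument drives the
dissipation, and with it the distance to the critical set, to zero.

The argument needs `g = Hᵀ∇Φ`, hence the derivative of `h`, to be continuous. This follows from
the Lyapunov inequalities: they make `h` continuous and `∂ₓf(h(u), u)` injective, so `h` is locally
the `C¹` implicit function of `f = 0`. For injectivity, if `v` were a unit vector in the kernel,
then `f` is `o(s)` at `x₀ + s v`, while `W` penalised by a logarithm centred there has a nearby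
local minimum, at which `W` decreases along `f` at a rate of at most a small multiple of `s²`.
-/

open Filter Metric Real
open scoped RealInnerProductSpace Topology NNReal

section Asymptotics

lemma antitoneOn_of_hasDerivWithinAt_self_nonpos {s : Set ℝ} (hs : Convex ℝ s) {ψ ψ' : ℝ → ℝ}
    (hψ : ∀ t ∈ s, HasDerivWithinAt ψ (ψ' t) s t) (hψ' : ∀ t ∈ s, ψ' t ≤ 0) :
    AntitoneOn ψ s :=
  antitoneOn_of_hasDerivWithinAt_nonpos hs (fun t ht => (hψ t ht).continuousWithinAt)
    (fun t ht => (hψ t (interior_subset ht)).mono interior_subset)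
    (fun t ht => hψ' t (interior_subset ht))

lemma tendsto_atTop_zero_of_hasDerivWithinAt_le_neg {φ ψ ψ' : ℝ → ℝ} {m : ℝ}
    (hφ : UniformContinuousOn φ (Set.Ici 0)) (hφ0 : ∀ t ≥ 0, 0 ≤ φ t)
    (hψ : ∀ t ≥ 0, HasDerivWithinAt ψ (ψ' t) (Set.Ici 0) t) (hψ' : ∀ t ≥ 0, ψ' t ≤ -φ t)
    (hm : ∀ t ≥ 0, m ≤ ψ t) :
    Tendsto φ atTop (𝓝 0) := by
  have hanti : AntitoneOn ψ (Set.Ici 0) :=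
    antitoneOn_of_hasDerivWithinAt_self_nonpos (convex_Ici 0) hψ
      fun t ht => (hψ' t ht).trans (neg_nonpos.mpr (hφ0 t ht))
  obtain ⟨l, hl⟩ : ∃ l, Tendsto ψ atTop (𝓝 l) := by
    have hmax : Antitone fun t => ψ (max t 0) := fun s t hst =>
      hanti (le_max_right s 0) (le_max_right t 0) (max_le_max_right 0 hst)
    have hbdd : BddBelow (Set.range fun t => ψ (max t 0)) :=
      ⟨m, Set.forall_mem_range.mpr fun t => hm _ (le_max_right t 0)⟩
    refine ⟨_, (tendsto_atTop_ciInf hmax hbdd).congr' ?_⟩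
    filter_upwards [eventually_ge_atTop 0] with t ht
    rw [max_eq_left ht]
  rw [Metric.tendsto_atTop']
  intro ε hε
  obtain ⟨τ, hτ, hφτ⟩ := Metric.uniformContinuousOn_iff_le.mp hφ (ε / 2) (half_pos hε)
  have hdrop : ∀ᶠ t in atTop, ψ t - ψ (t + τ) < ε / 2 * τ := by
    have hlim := hl.sub (hl.comp (tendsto_atTop_add_const_right atTop τ tendsto_id))
    rw [sub_self] at hlim
    exact hlim.eventually_lt_const (by positivity)
  obtain ⟨T, hT⟩ := eventually_atTop.mp hdrop
  refine ⟨max T 0, fun t ht => ?_⟩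
  have ht0 : 0 ≤ t := (le_max_right T 0).trans ht.le
  obtain ⟨s, ⟨hts, hst⟩, hslope⟩ :
      ∃ s ∈ Set.Ioo t (t + τ), ψ' s = (ψ (t + τ) - ψ t) / (t + τ - t) :=
    exists_hasDerivAt_eq_slope ψ ψ' (lt_add_of_pos_right t hτ)
      (fun s hs => ((hψ s (ht0.trans hs.1)).continuousWithinAt).mono
        fun r hr => ht0.trans hr.1)
      (fun s hs => (hψ s (ht0.trans hs.1.le)).hasDerivAt (Ici_mem_nhds (ht0.trans_lt hs.1)))
  have hs0 : 0 ≤ s := ht0.trans hts.le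
  have hφs : φ s < ε / 2 := by
    have hrate : -(ε / 2) < ψ' s := by
      rw [hslope, add_sub_cancel_left, lt_div_iff₀ hτ]
      linarith [hT t ((le_max_left T 0).trans ht.le)]
    linarith [hψ' s hs0]
  have hclose : dist (φ t) (φ s) ≤ ε / 2 :=
    hφτ t ht0 s hs0 (by rw [dist_comm, Real.dist_eq, abs_of_pos (sub_pos.mpr hts)]; linarith)
  rw [Real.dist_0_eq_abs, abs_of_nonneg (hφ0 t ht0)]
  linarith [(abs_le.mp hclose).2]

lemma tendsto_infDist_preimage_singleton_of_isCompact {ι Z Y : Type*} [PseudoMetricSpace Z]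
    [TopologicalSpace Y] [T2Space Y] {l : Filter ι} {K : Set Z} (hK : IsCompact K) {z : ι → Z}
    (hz : ∀ᶠ i in l, z i ∈ K) {D : Z → Y} (hD : Continuous D) {c : Y}
    (hlim : Tendsto (fun i => D (z i)) l (𝓝 c)) :
    Tendsto (fun i => infDist (z i) (D ⁻¹' {c})) l (𝓝 0) := by
  rw [Metric.tendsto_nhds]
  intro ε hε
  have hS : IsCompact (K ∩ {y | ε ≤ infDist y (D ⁻¹' {c})}) :=
    hK.inter_right (isClosed_le continuous_const (continuous_infDist_pt _))
  have hc : c ∉ D '' (K ∩ {y | ε ≤ infDist y (D ⁻¹' {c})}) := by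
    rintro ⟨y, ⟨-, hy⟩, hyc⟩
    exact hε.not_ge (hy.trans (infDist_zero_of_mem (Set.mem_preimage.mpr hyc)).le)
  filter_upwards [hz,
    hlim.eventually ((hS.image hD).isClosed.isOpen_compl.mem_nhds hc)] with i hi hDi
  rw [Real.dist_0_eq_abs, abs_of_nonneg infDist_nonneg]
  by_contra! hge
  exact hDi ⟨z i, ⟨hi, hge⟩, rfl⟩

theorem tendsto_infDist_zero_of_lyapunov {Z : Type*} [NormedAddCommGroup Z] [NormedSpace ℝ Z]
    {V : Z → Z} (hV : Continuous V) {Ψ D : Z → ℝ} (hΨ : Continuous Ψ)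
    (hΨ_cpt : ∀ b, IsCompact {y | Ψ y ≤ b}) (hD : Continuous D) (hD0 : ∀ y, 0 ≤ D y)
    {z : ℝ → Z} (hz : ∀ t ≥ 0, HasDerivWithinAt z (V (z t)) (Set.Ici 0) t)
    {ψ' : ℝ → ℝ} (hψ : ∀ t ≥ 0, HasDerivWithinAt (fun t => Ψ (z t)) (ψ' t) (Set.Ici 0) t)
    (hψ' : ∀ t ≥ 0, ψ' t ≤ -D (z t)) :
    Tendsto (fun t => infDist (z t) (D ⁻¹' {0})) atTop (𝓝 0) := by
  set K : Set Z := {y | Ψ y ≤ Ψ (z 0)}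
  have hK : IsCompact K := hΨ_cpt _
  have hzK : Set.MapsTo z (Set.Ici 0) K := fun t ht =>
    antitoneOn_of_hasDerivWithinAt_self_nonpos (convex_Ici 0) hψ
      (fun s hs => (hψ' s hs).trans (neg_nonpos.mpr (hD0 _))) Set.self_mem_Ici ht ht
  have hz_uc : UniformContinuousOn z (Set.Ici 0) := by
    obtain ⟨M, hM⟩ := hK.exists_bound_of_continuousOn hV.continuousOn
    have hz_lip : LipschitzOnWith M.toNNReal z (Set.Ici 0) :=
      (convex_Ici 0).lipschitzOnWith_of_nnnorm_hasDerivWithin_le hz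
        fun t ht => NNReal.coe_le_coe.mp ((hM _ (hzK ht)).trans (le_coe_toNNReal M))
    exact hz_lip.uniformContinuousOn
  have hDz_uc : UniformContinuousOn (D ∘ z) (Set.Ici 0) :=
    (hK.uniformContinuousOn_of_continuous hD.continuousOn).comp hz_uc hzK
  obtain ⟨m, hm⟩ := hK.bddBelow_image hΨ.continuousOn
  refine tendsto_infDist_preimage_singleton_of_isCompact hK
    ((eventually_ge_atTop 0).mono fun t ht => hzK ht) hD ?_
  exact tendsto_atTop_zero_of_hasDerivWithinAt_le_neg hDz_uc (fun t _ => hD0 _) hψ hψ'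
    fun t ht => hm ⟨z t, hzK ht, rfl⟩

end Asymptotics

section SteadyState

lemma continuous_of_mul_sq_dist_le {E U : Type*} [PseudoMetricSpace E] [TopologicalSpace U]
    {h : U → E} {W : E → U → ℝ} {α : ℝ} (hα : 0 < α) (hW : ∀ x, Continuous (W x))
    (hW_lb : ∀ x u, α * dist x (h u) ^ 2 ≤ W x u) (hW_zero : ∀ u, W (h u) u ≤ 0) :
    Continuous h := by
  rw [continuous_iff_continuousAt]
  intro u
  have hWu : W (h u) u = 0 := (hW_zero u).antisymm (le_trans (by positivity) (hW_lb (h u) u))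
  have hlim : Tendsto (fun v => W (h u) v / α) (𝓝 u) (𝓝 0) := by
    simpa only [hWu, zero_div] using ((hW (h u)).tendsto u).div_const α
  have hsq : Tendsto (fun v => dist (h v) (h u) ^ 2) (𝓝 u) (𝓝 0) :=
    squeeze_zero (fun _ => sq_nonneg _)
      (fun v => by rw [le_div_iff₀' hα, dist_comm]; exact hW_lb (h u) v) hlim
  rw [ContinuousAt, tendsto_iff_dist_tendsto_zero]
  simpa [Real.sqrt_sq dist_nonneg] using hsq.sqrt

lemma contDiffAt_of_eventually_apply_eq {𝕜 E₁ E₂ F : Type*} [RCLike 𝕜]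
    [NormedAddCommGroup E₁] [NormedSpace 𝕜 E₁] [CompleteSpace E₁]
    [NormedAddCommGroup E₂] [NormedSpace 𝕜 E₂] [CompleteSpace E₂]
    [NormedAddCommGroup F] [NormedSpace 𝕜 F] [CompleteSpace F]
    {n : WithTop ℕ∞} (hn : n ≠ 0) {f : E₁ × E₂ → F} {h : E₁ → E₂} {u : E₁}
    (hf : ContDiffAt 𝕜 n f (u, h u)) (hh : ContinuousAt h u)
    (hinv : (fderiv 𝕜 f (u, h u) ∘L .inr 𝕜 E₁ E₂).IsInvertible)
    (heq : ∀ᶠ v in 𝓝 u, f (v, h v) = f (u, h u)) :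
    ContDiffAt 𝕜 n h u := by
  refine (hf.contDiffAt_implicitFunction hn hinv).congr_of_eventuallyEq ?_
  have hgraph : Tendsto (fun v => (v, h v)) (𝓝 u) (𝓝 (u, h u)) := continuousAt_id.prodMk hh
  filter_upwards [hgraph.eventually (hf.eventually_apply_eq_iff_implicitFunction hn hinv), heq]
    with v hiff hv
  exact (hiff.mp hv).symm

lemma exists_forall_mem_ball_norm_le_of_map_eq_zero {E F : Type*}
    [NormedAddCommGroup E] [NormedSpace ℝ E] [NormedAddCommGroup F] [NormedSpace ℝ F]
    {f : E → F} {x₀ v : E} {A : E →L[ℝ] F} (hf0 : f x₀ = 0) (hA : HasFDerivAt f A x₀)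
    (hAv : A v = 0) (hv : ‖v‖ = 1) {δ : ℝ} (hδ : 0 < δ) :
    ∃ s > 0, ∀ y ∈ ball (x₀ + s • v) (s / 2),
      ‖f y‖ ≤ (‖A‖ + 1) * (δ * s + ‖y - (x₀ + s • v)‖) := by
  have hlittle := hA.isLittleO.def (half_pos hδ)
  obtain ⟨r, hr, hball⟩ := Metric.eventually_nhds_iff.mp hlittle
  refine ⟨r / 2, half_pos hr, fun y hy => ?_⟩
  set s := r / 2 with hs
  set d := ‖y - (x₀ + s • v)‖
  have hs0 : 0 < s := half_pos hr
  have hd : d < s / 2 := mem_ball_iff_norm.mp hy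
  have hyx : ‖y - x₀‖ ≤ s + d := calc
    ‖y - x₀‖ = ‖s • v + (y - (x₀ + s • v))‖ := by congr 1; abel
    _ ≤ ‖s • v‖ + d := norm_add_le _ _
    _ = s + d := by rw [norm_smul, hv, mul_one, norm_of_nonneg hs0.le]
  have hrem : ‖f y - A (y - x₀)‖ ≤ δ / 2 * ‖y - x₀‖ := by
    simpa only [hf0, sub_zero] using hball (show dist y x₀ < r by rw [dist_eq_norm]; linarith)
  have hAy : ‖A (y - x₀)‖ ≤ ‖A‖ * d := by
    have hker : A (y - x₀) = A (y - (x₀ + s • v)) := by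
      rw [← sub_sub, map_sub A (y - x₀), map_smul, hAv, smul_zero, sub_zero]
    exact hker ▸ A.le_opNorm _
  have hδs : 0 ≤ ‖A‖ * (δ * s) := by positivity
  calc ‖f y‖ ≤ ‖f y - A (y - x₀)‖ + ‖A (y - x₀)‖ := norm_le_norm_sub_add _ _
    _ ≤ δ / 2 * (s + s / 2) + ‖A‖ * d := by gcongr; exact hrem.trans (by gcongr; linarith)
    _ ≤ (‖A‖ + 1) * (δ * s + d) := by nlinarith [norm_nonneg (y - (x₀ + s • v)), mul_pos hδ hs0]

section Linearization

variable {E : Type*} [NormedAddCommGroup E] [InnerProductSpace ℝ E] [ProperSpace E] {W : E → ℝ}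

lemma exists_mem_ball_fderiv_eq_log_penalty (hW : Differentiable ℝ W) (hW0 : ∀ y, 0 ≤ W y)
    {y₀ : E} {η ρ k : ℝ} (hη : 0 < η) (hρ : 0 < ρ)
    (hk : W y₀ < k * log (1 + (ρ / η) ^ 2)) :
    ∃ y ∈ ball y₀ ρ, ∀ v,
      fderiv ℝ W y v = -(2 * k / (η ^ 2 + ‖y - y₀‖ ^ 2) * ⟪y - y₀, v⟫) := by
  have hpos : ∀ y : E, 0 < η ^ 2 + ‖y - y₀‖ ^ 2 := fun y => by positivity
  set J : E → ℝ := fun y => W y + k * log (η ^ 2 + ‖y - y₀‖ ^ 2)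
  have hJ : ∀ y, HasFDerivAt J (fderiv ℝ W y + k • ((η ^ 2 + ‖y - y₀‖ ^ 2)⁻¹ •
      (2 • innerSL ℝ (y - y₀)))) y := fun y => by
    have hsq : HasFDerivAt (fun y => ‖y - y₀‖ ^ 2) (2 • innerSL ℝ (y - y₀)) y := by
      simpa using ((hasFDerivAt_id y).sub_const y₀).norm_sq
    exact (hW y).hasFDerivAt.add (((hsq.const_add _).log (hpos y).ne').const_mul k)
  have hsphere : ∀ y ∈ sphere y₀ ρ, J y₀ < J y := by
    intro y hy
    have hlog : log (η ^ 2 + ρ ^ 2) = log (η ^ 2) + log (1 + (ρ / η) ^ 2) := by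
      rw [← log_mul (by positivity) (by positivity)]
      congr 1
      field_simp
    simp only [J, sub_self, norm_zero, mem_sphere_iff_norm.mp hy, hlog]
    simp only [ne_eq, OfNat.ofNat_ne_zero, not_false_eq_true, zero_pow, add_zero]
    linarith [hW0 y]
  obtain ⟨y, hy, hmin⟩ := exists_isLocalMin_mem_ball
    (fun y _ => (hJ y).continuousAt.continuousWithinAt) (mem_closedBall_self hρ.le) hsphere
  refine ⟨y, hy, fun v => ?_⟩
  have hcrit := congrArg (fun T : E →L[ℝ] ℝ => T v) (hmin.hasFDerivAt_eq_zero (hJ y))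
  simp only [add_apply, smul_apply, innerSL_apply_apply, smul_eq_mul, nsmul_eq_mul, zero_apply,
    Nat.cast_ofNat] at hcrit
  rw [eq_neg_iff_add_eq_zero, ← hcrit]
  ring

lemma exists_mem_ball_neg_le_fderiv_apply (hW : Differentiable ℝ W) (hW0 : ∀ y, 0 ≤ W y)
    {y₀ : E} {η ρ k a : ℝ} (hη : 0 < η) (hρ : 0 < ρ) (hk0 : 0 ≤ k)
    (hk : W y₀ < k * log (1 + (ρ / η) ^ 2)) {g : E → E} (ha : 0 ≤ a)
    (hg : ∀ y ∈ ball y₀ ρ, ‖g y‖ ≤ a * (η + ‖y - y₀‖)) :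
    ∃ y ∈ ball y₀ ρ, -(3 * a * k) ≤ fderiv ℝ W y (g y) := by
  obtain ⟨y, hy, hfderiv⟩ := exists_mem_ball_fderiv_eq_log_penalty hW hW0 hη hρ hk
  refine ⟨y, hy, ?_⟩
  set d := ‖y - y₀‖
  have hinner : ⟪y - y₀, g y⟫ ≤ 3 / 2 * a * (η ^ 2 + d ^ 2) := calc
    ⟪y - y₀, g y⟫ ≤ d * ‖g y‖ := real_inner_le_norm _ _
    _ ≤ d * (a * (η + d)) := by gcongr; exact hg y hy
    _ = a * (d * (η + d)) := by ring
    _ ≤ a * (3 / 2 * (η ^ 2 + d ^ 2)) := by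
      refine mul_le_mul_of_nonneg_left ?_ ha
      nlinarith [sq_nonneg (η - d), sq_nonneg η]
    _ = 3 / 2 * a * (η ^ 2 + d ^ 2) := by ring
  rw [hfderiv, neg_le_neg_iff, div_mul_eq_mul_div, div_le_iff₀ (by positivity)]
  calc 2 * k * ⟪y - y₀, g y⟫ ≤ 2 * k * (3 / 2 * a * (η ^ 2 + d ^ 2)) := by gcongr
    _ = 3 * a * k * (η ^ 2 + d ^ 2) := by ring

lemma mul_sq_lt_mul_log_one_add_sq_div_exp {κ s : ℝ} (hκ : 0 < κ) (hs : 0 < s) (β : ℝ) :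
    β * s ^ 2 < κ * s ^ 2 * log (1 + (s / 2 / (exp (-(β / (2 * κ))) / 2 * s)) ^ 2) := by
  have hratio : (s / 2 / (exp (-(β / (2 * κ))) / 2 * s)) ^ 2 = exp (β / κ) := by
    rw [show s / 2 / (exp (-(β / (2 * κ))) / 2 * s) = (exp (-(β / (2 * κ))))⁻¹ by field_simp,
      exp_neg, inv_inv, ← exp_nat_mul]
    congr 1
    push_cast
    field_simp
  have hlog : β / κ < log (1 + exp (β / κ)) :=
    (lt_log_iff_exp_lt (by positivity)).mpr (lt_one_add _)
  rw [hratio]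
  calc β * s ^ 2 = κ * s ^ 2 * (β / κ) := by field_simp
    _ < κ * s ^ 2 * log (1 + exp (β / κ)) := by gcongr

theorem injective_of_quadratic_lyapunov {f : E → E} {x₀ : E} {A : E →L[ℝ] E}
    (hf0 : f x₀ = 0) (hA : HasFDerivAt f A x₀) (hW : Differentiable ℝ W) (hW0 : ∀ y, 0 ≤ W y)
    {β γ : ℝ} (hγ : 0 < γ) (hW_ub : ∀ y, W y ≤ β * ‖y - x₀‖ ^ 2)
    (hW_decay : ∀ y, fderiv ℝ W y (f y) ≤ -γ * ‖y - x₀‖ ^ 2) :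
    Function.Injective A := by
  rw [injective_iff_map_eq_zero]
  by_contra! ⟨v₀, hv₀, hv₀_ne⟩
  obtain ⟨v, hAv, hv⟩ : ∃ v, A v = 0 ∧ ‖v‖ = 1 :=
    ⟨‖v₀‖⁻¹ • v₀, by rw [map_smul, hv₀, smul_zero], by
      rw [norm_smul, norm_inv, norm_norm, inv_mul_cancel₀ (norm_ne_zero_iff.mpr hv₀_ne)]⟩
  set a := ‖A‖ + 1
  have ha : 0 < a := by positivity
  set κ := γ / (16 * a) with hκ_def
  have hκ : 0 < κ := by positivity
  -- chosen so that the log penalty at radius `s / 2` outweighs `W y₀ ≤ β s²`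
  set δ := exp (-(β / (2 * κ))) / 2
  have hδ : 0 < δ := by positivity
  obtain ⟨s, hs, hf_le⟩ := exists_forall_mem_ball_norm_le_of_map_eq_zero hf0 hA hAv hv hδ
  set y₀ := x₀ + s • v
  have hy₀ : ‖y₀ - x₀‖ = s := by
    rw [add_sub_cancel_left, norm_smul, hv, mul_one, norm_of_nonneg hs.le]
  have hcenter : W y₀ < κ * s ^ 2 * log (1 + (s / 2 / (δ * s)) ^ 2) :=
    (hy₀ ▸ hW_ub y₀).trans_lt (mul_sq_lt_mul_log_one_add_sq_div_exp hκ hs β)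
  obtain ⟨y, hy, hslow⟩ := exists_mem_ball_neg_le_fderiv_apply hW hW0 (by positivity)
    (half_pos hs) (by positivity) hcenter ha.le hf_le
  have hy_far : s / 2 ≤ ‖y - x₀‖ := by
    have htri : ‖y₀ - x₀‖ ≤ ‖y₀ - y‖ + ‖y - x₀‖ := norm_sub_le_norm_sub_add_norm_sub _ _ _
    rw [norm_sub_rev y₀ y] at htri
    linarith [mem_ball_iff_norm.mp hy]
  have hfast : fderiv ℝ W y (f y) ≤ -γ * (s / 2) ^ 2 :=
    (hW_decay y).trans (by rw [neg_mul, neg_mul, neg_le_neg_iff]; gcongr)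
  have hrate : 3 * a * (κ * s ^ 2) = 3 / 16 * (γ * s ^ 2) := by
    rw [hκ_def]
    field_simp
  linarith [mul_pos hγ (pow_pos hs 2)]

end Linearization

end SteadyState

section PartialDerivatives

variable {𝕜 E F G : Type*} [NontriviallyNormedField 𝕜] [NormedAddCommGroup E] [NormedSpace 𝕜 E]
  [NormedAddCommGroup F] [NormedSpace 𝕜 F] [NormedAddCommGroup G] [NormedSpace 𝕜 G]
  {φ : E → F → G} {x : E} {u : F}

lemma hasFDerivAt_left_of_uncurry (hφ : DifferentiableAt 𝕜 (Function.uncurry φ) (x, u)) :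
    HasFDerivAt (fun y => φ y u) (fderiv 𝕜 (Function.uncurry φ) (x, u) ∘L .inl 𝕜 E F) x :=
  HasFDerivAt.comp (f := fun y => (y, u)) x hφ.hasFDerivAt (hasFDerivAt_prodMk_left x u)

lemma hasFDerivAt_right_of_uncurry (hφ : DifferentiableAt 𝕜 (Function.uncurry φ) (x, u)) :
    HasFDerivAt (fun v => φ x v) (fderiv 𝕜 (Function.uncurry φ) (x, u) ∘L .inr 𝕜 E F) u :=
  HasFDerivAt.comp (f := fun v => (x, v)) u hφ.hasFDerivAt (hasFDerivAt_prodMk_right x u)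

end PartialDerivatives

section PartialGradients

variable {E F : Type*} [NormedAddCommGroup E] [InnerProductSpace ℝ E]
  [NormedAddCommGroup F] [InnerProductSpace ℝ F] {φ : E → F → ℝ}

lemma continuous_gradient_left [CompleteSpace E] (hφ : ContDiff ℝ 1 (Function.uncurry φ)) :
    Continuous fun z : E × F => gradient (fun y => φ y z.2) z.1 := by
  refine (InnerProductSpace.toDual ℝ E).symm.continuous.comp ?_
  refine ((hφ.continuous_fderiv one_ne_zero).clm_comp_const (.inl ℝ E F)).congr fun z => ?_
  exact (hasFDerivAt_left_of_uncurry (hφ.differentiable one_ne_zero z)).fderiv.symm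

lemma continuous_gradient_right [CompleteSpace F] (hφ : ContDiff ℝ 1 (Function.uncurry φ)) :
    Continuous fun z : E × F => gradient (fun v => φ z.1 v) z.2 := by
  refine (InnerProductSpace.toDual ℝ F).symm.continuous.comp ?_
  refine ((hφ.continuous_fderiv one_ne_zero).clm_comp_const (.inr ℝ E F)).congr fun z => ?_
  exact (hasFDerivAt_right_of_uncurry (hφ.differentiable one_ne_zero z)).fderiv.symm

variable [CompleteSpace E] [CompleteSpace F]

lemma fderiv_uncurry_apply_eq_inner_gradient {x : E} {u : F}
    (hφ : DifferentiableAt ℝ (Function.uncurry φ) (x, u)) (a : E) (b : F) :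
    fderiv ℝ (Function.uncurry φ) (x, u) (a, b) =
      ⟪gradient (fun y => φ y u) x, a⟫ + ⟪gradient (fun v => φ x v) u, b⟫ := by
  rw [inner_gradient_left, inner_gradient_left, (hasFDerivAt_left_of_uncurry hφ).fderiv,
    (hasFDerivAt_right_of_uncurry hφ).fderiv]
  simp [← map_add]

variable {s : Set ℝ} {x : ℝ → E} {u : ℝ → F} {x' : E} {u' : F} {t : ℝ}

lemma hasDerivWithinAt_comp_uncurry
    (hφ : DifferentiableAt ℝ (Function.uncurry φ) (x t, u t))
    (hx : HasDerivWithinAt x x' s t) (hu : HasDerivWithinAt u u' s t) :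
    HasDerivWithinAt (fun t => φ (x t) (u t))
      (⟪gradient (fun y => φ y (u t)) (x t), x'⟫ + ⟪gradient (fun v => φ (x t) v) (u t), u'⟫)
      s t := by
  rw [← fderiv_uncurry_apply_eq_inner_gradient hφ]
  exact HasFDerivAt.comp_hasDerivWithinAt (f := fun t => (x t, u t)) t hφ.hasFDerivAt
    (hx.prodMk hu)

/-- The reduced gradient `H(u)ᵀ∇Φ(x, u) = Dh(u)ᵀ∇ₓΦ(x, u) + ∇ᵤΦ(x, u)`: on the graph `x = h(u)` it
is the gradient of `u ↦ Φ(h(u), u)`. -/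
noncomputable def reducedGradient (h : F → E) (Φ : E → F → ℝ) (x : E) (u : F) : F :=
  ContinuousLinearMap.adjoint (fderiv ℝ h u) (gradient (fun y => Φ y u) x) +
    gradient (fun v => Φ x v) u

variable {h : F → E} {Φ : E → F → ℝ}

lemma reducedGradient_sub (x y : E) (u : F) :
    reducedGradient h Φ x u - reducedGradient h Φ y u =
      ContinuousLinearMap.adjoint (fderiv ℝ h u)
          (gradient (fun y => Φ y u) x - gradient (fun y => Φ y u) y) +
        (gradient (fun v => Φ x v) u - gradient (fun v => Φ y v) u) := by
  rw [reducedGradient, reducedGradient, map_sub, add_sub_add_comm]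

lemma continuous_reducedGradient (hh : ContDiff ℝ 1 h) (hΦ : ContDiff ℝ 1 (Function.uncurry Φ)) :
    Continuous fun z : E × F => reducedGradient h Φ z.1 z.2 := by
  have hadj : Continuous fun z : E × F => ContinuousLinearMap.adjoint (fderiv ℝ h z.2) :=
    ContinuousLinearMap.adjoint.continuous.comp
      ((hh.continuous_fderiv one_ne_zero).comp continuous_snd)
  exact (hadj.clm_apply (continuous_gradient_left hΦ)).add (continuous_gradient_right hΦ)

lemma hasDerivWithinAt_comp_graph (hh : DifferentiableAt ℝ h (u t))
    (hΦ : DifferentiableAt ℝ (Function.uncurry Φ) (h (u t), u t))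
    (hu : HasDerivWithinAt u u' s t) :
    HasDerivWithinAt (fun t => Φ (h (u t)) (u t))
      ⟪reducedGradient h Φ (h (u t)) (u t), u'⟫ s t := by
  rw [reducedGradient, inner_add_left, ContinuousLinearMap.adjoint_inner_left]
  exact hasDerivWithinAt_comp_uncurry (x := h ∘ u) hΦ
    (hh.hasFDerivAt.comp_hasDerivWithinAt t hu) hu

end PartialGradients

theorem contDiff_of_quadratic_lyapunov {E F : Type*}
    [NormedAddCommGroup E] [InnerProductSpace ℝ E] [ProperSpace E]
    [NormedAddCommGroup F] [NormedSpace ℝ F] [CompleteSpace F]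
    {f : E → F → E} {h : F → E} {W : E → F → ℝ} {α β γ : ℝ} (hα : 0 < α) (hγ : 0 < γ)
    (hf : ContDiff ℝ 1 (Function.uncurry f)) (hsteady : ∀ u, f (h u) u = 0)
    (hW : Differentiable ℝ (Function.uncurry W))
    (hW_lb : ∀ x u, α * ‖x - h u‖ ^ 2 ≤ W x u) (hW_ub : ∀ x u, W x u ≤ β * ‖x - h u‖ ^ 2)
    (hW_decay : ∀ x u, fderiv ℝ (fun y => W y u) x (f x u) ≤ -γ * ‖x - h u‖ ^ 2) :
    ContDiff ℝ 1 h := by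
  have hW_zero : ∀ u, W (h u) u ≤ 0 := fun u => by simpa using hW_ub (h u) u
  have hh : Continuous h :=
    continuous_of_mul_sq_dist_le hα (fun x => hW.continuous.comp (.prodMk_right x))
      (fun x u => by rw [dist_eq_norm]; exact hW_lb x u) hW_zero
  rw [contDiff_iff_contDiffAt]
  intro u
  have hf_swap : ContDiff ℝ 1 (Function.uncurry fun v y => f y v) :=
    hf.comp (contDiff_snd.prodMk contDiff_fst)
  have hinj : Function.Injective
      (fderiv ℝ (Function.uncurry fun v y => f y v) (u, h u) ∘L .inr ℝ F E) :=
    injective_of_quadratic_lyapunov (W := fun y => W y u) (hsteady u)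
      (hasFDerivAt_right_of_uncurry (hf_swap.differentiable one_ne_zero _))
      (fun y => (hasFDerivAt_left_of_uncurry (hW (y, u))).differentiableAt)
      (fun y => (by positivity : 0 ≤ α * ‖y - h u‖ ^ 2).trans (hW_lb y u)) hγ
      (fun y => hW_ub y u) (fun y => hW_decay y u)
  have : FiniteDimensional ℝ E := .of_locallyCompactSpace ℝ
  exact contDiffAt_of_eventually_apply_eq one_ne_zero hf_swap.contDiffAt hh.continuousAt
    ⟨(LinearEquiv.ofInjectiveEndo _ hinj).toContinuousLinearEquiv, rfl⟩
    (.of_forall fun v => (hsteady v).trans (hsteady u).symm)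

lemma inner_apply_self_nonneg {F : Type*} [NormedAddCommGroup F] [InnerProductSpace ℝ F]
    {T : F →L[ℝ] F} (hT : ∀ v, v ≠ 0 → 0 < ⟪T v, v⟫) (v : F) : 0 ≤ ⟪T v, v⟫ := by
  rcases eq_or_ne v 0 with rfl | hv
  · simp
  · exact (hT v hv).le

lemma norm_apply_sq_le_of_isPositive {F : Type*} [NormedAddCommGroup F] [InnerProductSpace ℝ F]
    {T : F →L[ℝ] F} (hT : T.IsPositive) (x : F) : ‖T x‖ ^ 2 ≤ ‖T‖ * ⟪T x, x⟫ := by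
  have hcs : ⟪T x, T x⟫ ^ 2 ≤ ⟪T x, x⟫ * ⟪T (T x), T x⟫ :=
    LinearMap.BilinForm.apply_sq_le_of_symm ((innerₗ F) ∘ₗ (T : F →ₗ[ℝ] F))
      hT.inner_nonneg_left ⟨fun y z => by
        simpa [real_inner_comm y] using hT.isSymmetric y z⟩ x (T x)
  have hop : ⟪T (T x), T x⟫ ≤ ‖T‖ * ‖T x‖ ^ 2 := calc
    ⟪T (T x), T x⟫ ≤ ‖T (T x)‖ * ‖T x‖ := real_inner_le_norm _ _
    _ ≤ ‖T‖ * ‖T x‖ * ‖T x‖ := by gcongr; exact T.le_opNorm _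
    _ = ‖T‖ * ‖T x‖ ^ 2 := by ring
  rcases (norm_nonneg (T x)).eq_or_lt with hTx | hTx
  · rw [← hTx, zero_pow two_ne_zero]
    exact mul_nonneg (norm_nonneg T) (hT.inner_nonneg_left x)
  refine le_of_mul_le_mul_right ?_ (pow_pos hTx 2)
  calc ‖T x‖ ^ 2 * ‖T x‖ ^ 2 = ⟪T x, T x⟫ ^ 2 := by rw [real_inner_self_eq_norm_sq, sq (_ ^ 2)]
    _ ≤ ⟪T x, x⟫ * (‖T‖ * ‖T x‖ ^ 2) :=
      hcs.trans (mul_le_mul_of_nonneg_left hop (hT.inner_nonneg_left x))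
    _ = ‖T‖ * ⟪T x, x⟫ * ‖T x‖ ^ 2 := by ring

lemma exists_pos_two_mul_mul_le {q L b : ℝ} (hq : 0 ≤ q) (hqb : q * L ^ 2 < b) :
    ∃ μ > 0, ∀ P e w, 0 ≤ P → w ^ 2 ≤ q * P →
      2 * (L * e * w) ≤ (1 - μ) * P + (b - μ) * e ^ 2 := by
  obtain ⟨r, hqr, hrb⟩ := exists_between hqb
  have hr : 0 < r := (by positivity : 0 ≤ q * L ^ 2).trans_lt hqr
  refine ⟨min (1 - q * L ^ 2 / r) (b - r),
    lt_min (sub_pos.mpr ((div_lt_one hr).mpr hqr)) (sub_pos.mpr hrb), fun P e w hP hw => ?_⟩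
  have hyoung : 2 * (L * e * w) ≤ r * e ^ 2 + L ^ 2 / r * w ^ 2 := by
    have hsq : r * e ^ 2 + L ^ 2 / r * w ^ 2 - 2 * (L * e * w) = (r * e - L * w) ^ 2 / r := by
      field_simp
      ring
    have : 0 ≤ (r * e - L * w) ^ 2 / r := by positivity
    linarith
  calc 2 * (L * e * w) ≤ r * e ^ 2 + L ^ 2 / r * (q * P) := hyoung.trans (by gcongr)
    _ = (1 - (1 - q * L ^ 2 / r)) * P + (b - (b - r)) * e ^ 2 := by ring
    _ ≤ _ := by
      gcongr
      · exact min_le_left _ _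
      · exact min_le_right _ _

section Interconnection

variable {E F : Type*} [NormedAddCommGroup E]

/-- The candidate Lyapunov function `Φ(h(u), u) + c W(x, u)` of the interconnection. -/
def compositeLyapunov (h : F → E) (W Φ : E → F → ℝ) (c : ℝ) (z : E × F) : ℝ :=
  Φ (h z.2) z.2 + c * W z.1 z.2

lemma continuous_compositeLyapunov [TopologicalSpace F] {h : F → E} {W Φ : E → F → ℝ} (c : ℝ)
    (hh : Continuous h) (hΦ : Continuous (Function.uncurry Φ))
    (hW : Continuous (Function.uncurry W)) : Continuous (compositeLyapunov h W Φ c) :=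
  (hΦ.comp ((hh.comp continuous_snd).prodMk continuous_snd)).add (hW.const_mul c)

lemma isCompact_setOf_compositeLyapunov_le [ProperSpace E] [TopologicalSpace F] {h : F → E}
    {W Φ : E → F → ℝ} {α c : ℝ} (hα : 0 < α) (hc : 0 < c) (hh : Continuous h)
    (hΦ : Continuous (Function.uncurry Φ)) (hW : Continuous (Function.uncurry W))
    (hW_lb : ∀ x u, α * ‖x - h u‖ ^ 2 ≤ W x u) (hlevel : ∀ b, IsCompact {u | Φ (h u) u ≤ b})
    (b : ℝ) : IsCompact {z | compositeLyapunov h W Φ c z ≤ b} := by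
  have hΦh : Continuous fun u => Φ (h u) u := hΦ.comp (hh.prodMk continuous_id)
  obtain ⟨m, hm⟩ := (hlevel b).bddBelow_image hΦh.continuousOn
  have hclosed : IsClosed {z | compositeLyapunov h W Φ c z ≤ b} :=
    isClosed_le (continuous_compositeLyapunov c hh hΦ hW) continuous_const
  have hcpt : IsCompact ((fun y : E × F => (h y.2 + y.1, y.2)) ''
      (closedBall 0 √((b - m) / (c * α)) ×ˢ {u | Φ (h u) u ≤ b})) :=
    ((isCompact_closedBall _ _).prod (hlevel b)).image
      (((hh.comp continuous_snd).add continuous_fst).prodMk continuous_snd)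
  refine hcpt.of_isClosed_subset hclosed ?_
  rintro ⟨x, u⟩ (hz : Φ (h u) u + c * W x u ≤ b)
  have hcW : c * (α * ‖x - h u‖ ^ 2) ≤ c * W x u := mul_le_mul_of_nonneg_left (hW_lb x u) hc.le
  have hu : Φ (h u) u ≤ b := by
    linarith [(by positivity : 0 ≤ c * (α * ‖x - h u‖ ^ 2))]
  have hx : ‖x - h u‖ ≤ √((b - m) / (c * α)) := by
    refine le_sqrt_of_sq_le ?_
    rw [le_div_iff₀' (mul_pos hc hα), mul_assoc]
    linarith [hm ⟨u, hu, rfl⟩]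
  exact ⟨(x - h u, u), ⟨mem_closedBall_zero_iff.mpr hx, hu⟩, by simp⟩

variable [InnerProductSpace ℝ E] [CompleteSpace E] [NormedAddCommGroup F] [InnerProductSpace ℝ F]
  [CompleteSpace F] {h : F → E} {W Φ : E → F → ℝ} {Q : F → F →L[ℝ] F}

/-- The dissipation rate `⟪Q(u) g, g⟫ + ‖x - h(u)‖²`, with `g = H(u)ᵀ∇Φ(x, u)`: it bounds the decay
of the composite Lyapunov function and vanishes exactly at the critical points. -/
noncomputable def dissipation (h : F → E) (Φ : E → F → ℝ) (Q : F → F →L[ℝ] F) (z : E × F) : ℝ :=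
  ⟪Q z.2 (reducedGradient h Φ z.1 z.2), reducedGradient h Φ z.1 z.2⟫ + ‖z.1 - h z.2‖ ^ 2

lemma dissipation_nonneg (hQ : ∀ u v, 0 ≤ ⟪Q u v, v⟫) (z : E × F) : 0 ≤ dissipation h Φ Q z :=
  add_nonneg (hQ _ _) (sq_nonneg _)

lemma dissipation_eq_zero_iff (hQ : ∀ u v, v ≠ 0 → 0 < ⟪Q u v, v⟫) (z : E × F) :
    dissipation h Φ Q z = 0 ↔ z.1 = h z.2 ∧ reducedGradient h Φ z.1 z.2 = 0 := by
  have hQ_zero : ∀ u v, ⟪Q u v, v⟫ = 0 ↔ v = 0 := fun u v =>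
    ⟨fun hv => by_contra fun hne => (hQ u v hne).ne' hv, fun hv => by simp [hv]⟩
  rw [dissipation, add_eq_zero_iff_of_nonneg (inner_apply_self_nonneg (hQ _) _) (sq_nonneg _),
    hQ_zero, sq_eq_zero_iff, norm_eq_zero, sub_eq_zero, and_comm]

lemma continuous_dissipation (hh : ContDiff ℝ 1 h) (hΦ : ContDiff ℝ 1 (Function.uncurry Φ))
    (hQ : Continuous Q) : Continuous (dissipation h Φ Q) := by
  have hg := continuous_reducedGradient hh hΦ
  exact (((hQ.comp continuous_snd).clm_apply hg).inner hg).add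
    ((continuous_fst.sub (hh.continuous.comp continuous_snd)).norm.pow 2)

lemma hasDerivWithinAt_compositeLyapunov {s : Set ℝ} {x : ℝ → E} {u : ℝ → F} {x' : E} {u' : F}
    {t : ℝ} (c : ℝ) (hh : DifferentiableAt ℝ h (u t))
    (hΦ : DifferentiableAt ℝ (Function.uncurry Φ) (h (u t), u t))
    (hW : DifferentiableAt ℝ (Function.uncurry W) (x t, u t))
    (hx : HasDerivWithinAt x x' s t) (hu : HasDerivWithinAt u u' s t) :
    HasDerivWithinAt (fun t => compositeLyapunov h W Φ c (x t, u t))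
      (⟪reducedGradient h Φ (h (u t)) (u t), u'⟫ +
        c * (⟪gradient (fun y => W y (u t)) (x t), x'⟫ +
          ⟪gradient (fun v => W (x t) v) (u t), u'⟫)) s t :=
  (hasDerivWithinAt_comp_graph hh hΦ hu).add ((hasDerivWithinAt_comp_uncurry hW hx hu).const_mul c)

lemma compositeLyapunov_rate_le_neg_dissipation {γ ζ L q μ : ℝ} (hζ : 0 < ζ) (hL : 0 ≤ L)
    {x x' : E} {u : F} (hQ : (Q u).IsPositive) (hQ_bound : ‖Q u‖ ≤ q)
    (hμ : ∀ P e w, 0 ≤ P → w ^ 2 ≤ q * P →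
      2 * (L * e * w) ≤ (1 - μ) * P + (L / ζ * γ - μ) * e ^ 2)
    (hW_decay : ⟪gradient (fun y => W y u) x, x'⟫ ≤ -γ * ‖x - h u‖ ^ 2)
    (hW_gradu : ‖gradient (fun v => W x v) u‖ ≤ ζ * ‖x - h u‖)
    (hΦ_lip : ‖reducedGradient h Φ x u - reducedGradient h Φ (h u) u‖ ≤ L * ‖x - h u‖) :
    ⟪reducedGradient h Φ (h u) u, -(Q u (reducedGradient h Φ x u))⟫ +
        L / ζ * (⟪gradient (fun y => W y u) x, x'⟫ +
          ⟪gradient (fun v => W x v) u, -(Q u (reducedGradient h Φ x u))⟫) ≤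
      -(μ * dissipation h Φ Q (x, u)) := by
  rw [dissipation]
  set g := reducedGradient h Φ x u
  set w := Q u g
  set e := ‖x - h u‖
  have hP : 0 ≤ ⟪w, g⟫ := hQ.inner_nonneg_left g
  have hw : ‖w‖ ^ 2 ≤ q * ⟪w, g⟫ :=
    (norm_apply_sq_le_of_isPositive hQ g).trans (by gcongr)
  have hΦ_rate : ⟪reducedGradient h Φ (h u) u, -w⟫ ≤ L * e * ‖w‖ - ⟪w, g⟫ := calc
    ⟪reducedGradient h Φ (h u) u, -w⟫ = ⟪g - reducedGradient h Φ (h u) u, w⟫ - ⟪w, g⟫ := by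
      rw [inner_neg_right, inner_sub_left, real_inner_comm w g]
      ring
    _ ≤ L * e * ‖w‖ - ⟪w, g⟫ := by
      gcongr
      exact (real_inner_le_norm _ _).trans (by gcongr)
  have hW_rate : ⟪gradient (fun v => W x v) u, -w⟫ ≤ ζ * e * ‖w‖ :=
    (real_inner_le_norm _ _).trans (by rw [norm_neg]; gcongr)
  have hcW_rate : L / ζ * (⟪gradient (fun y => W y u) x, x'⟫ +
      ⟪gradient (fun v => W x v) u, -w⟫) ≤ L * e * ‖w‖ - L / ζ * γ * e ^ 2 := calc
    _ ≤ L / ζ * (-γ * e ^ 2 + ζ * e * ‖w‖) := by gcongr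
    _ = L * e * ‖w‖ - L / ζ * γ * e ^ 2 := by
      field_simp
      ring
  linarith [hμ ⟪w, g⟫ e ‖w‖ hP hw]

end Interconnection

theorem stmt3_general {E F : Type*} [NormedAddCommGroup E] [InnerProductSpace ℝ E] [ProperSpace E]
    [NormedAddCommGroup F] [InnerProductSpace ℝ F] [CompleteSpace F]
    {f : E → F → E} {h : F → E} {W Φ : E → F → ℝ} {Q : F → F →L[ℝ] F} {α β γ ζ L q : ℝ}
    (hα : 0 < α) (hγ : 0 < γ) (hζ : 0 < ζ) (hL : 0 < L)
    (hf : ContDiff ℝ 1 (Function.uncurry f)) (hsteady : ∀ u, f (h u) u = 0)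
    (hW : Differentiable ℝ (Function.uncurry W))
    (hW_lb : ∀ x u, α * ‖x - h u‖ ^ 2 ≤ W x u) (hW_ub : ∀ x u, W x u ≤ β * ‖x - h u‖ ^ 2)
    (hW_decay : ∀ x u, ⟪gradient (fun y => W y u) x, f x u⟫ ≤ -γ * ‖x - h u‖ ^ 2)
    (hW_gradu : ∀ x u, ‖gradient (fun v => W x v) u‖ ≤ ζ * ‖x - h u‖)
    (hΦ : ContDiff ℝ 1 (Function.uncurry Φ)) (hlevel : ∀ b, IsCompact {u | Φ (h u) u ≤ b})
    (hΦ_lip : ∀ x u,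
      ‖reducedGradient h Φ x u - reducedGradient h Φ (h u) u‖ ≤ L * ‖x - h u‖)
    (hQ : Continuous Q) (hQ_symm : ∀ u v w, ⟪Q u v, w⟫ = ⟪v, Q u w⟫)
    (hQ_pos : ∀ u v, v ≠ 0 → 0 < ⟪Q u v, v⟫) (hQ_bound : ∀ u, ‖Q u‖ ≤ q) (hq : q < γ / (ζ * L))
    {x : ℝ → E} {u : ℝ → F}
    (hx : ∀ t ≥ 0, HasDerivWithinAt x (f (x t) (u t)) (Set.Ici 0) t)
    (hu : ∀ t ≥ 0, HasDerivWithinAt u (-(Q (u t) (reducedGradient h Φ (x t) (u t))))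
      (Set.Ici 0) t) :
    Tendsto (fun t => infDist (x t, u t) {z | z.1 = h z.2 ∧ reducedGradient h Φ z.1 z.2 = 0})
      atTop (𝓝 0) := by
  have hh : ContDiff ℝ 1 h := contDiff_of_quadratic_lyapunov hα hγ hf hsteady hW hW_lb hW_ub
    fun x u => by rw [← inner_gradient_left]; exact hW_decay x u
  have hQ_nonneg : ∀ u v, 0 ≤ ⟪Q u v, v⟫ := fun u => inner_apply_self_nonneg (hQ_pos u)
  have hqL : q * L ^ 2 < L / ζ * γ := calc
    q * L ^ 2 < γ / (ζ * L) * L ^ 2 := by gcongr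
    _ = L / ζ * γ := by field_simp
  obtain ⟨μ, hμ, habsorb⟩ :=
    exists_pos_two_mul_mul_le ((norm_nonneg _).trans (hQ_bound 0)) hqL
  have hcrit : {z | z.1 = h z.2 ∧ reducedGradient h Φ z.1 z.2 = 0} =
      (fun z => μ * dissipation h Φ Q z) ⁻¹' {0} := by
    ext z
    simp [hμ.ne', dissipation_eq_zero_iff hQ_pos]
  rw [hcrit]
  have hg := continuous_reducedGradient hh hΦ
  exact tendsto_infDist_zero_of_lyapunov
    (V := fun z => (f z.1 z.2, -(Q z.2 (reducedGradient h Φ z.1 z.2))))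
    (hf.continuous.prodMk ((hQ.comp continuous_snd).clm_apply hg).neg)
    (continuous_compositeLyapunov (L / ζ) hh.continuous hΦ.continuous hW.continuous)
    (isCompact_setOf_compositeLyapunov_le hα (by positivity) hh.continuous hΦ.continuous
      hW.continuous hW_lb hlevel)
    ((continuous_dissipation hh hΦ hQ).const_mul μ)
    (fun z => mul_nonneg hμ.le (dissipation_nonneg hQ_nonneg z))
    (fun t ht => (hx t ht).prodMk (hu t ht))
    (fun t ht => hasDerivWithinAt_compositeLyapunov (L / ζ) (hh.differentiable one_ne_zero _)
      (hΦ.differentiable one_ne_zero _) (hW _) (hx t ht) (hu t ht))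
    (fun t _ => compositeLyapunov_rate_le_neg_dissipation hζ hL.le
      ((Q _).isPositive_iff.mpr ⟨hQ_symm _, hQ_nonneg _⟩) (hQ_bound _) habsorb
      (hW_decay _ _) (hW_gradu _ _) (hΦ_lip _ _))

/-- Main gradient-feedback stability theorem: under the timescale-separation
bound `sup_u ‖Q(u)‖ < γ/(ζL)`, every complete solution of the interconnection
`ẋ = f(x,u)`, `u̇ = -Q(u)H(u)ᵀ∇Φ(x,u)` converges to the set of critical points
of `min {Φ(x,u) : x = h(u)}`. -/
theorem stmt3 {n p : ℕ}
    (f : EuclideanSpace ℝ (Fin n) → EuclideanSpace ℝ (Fin p) → EuclideanSpace ℝ (Fin n))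
    (h : EuclideanSpace ℝ (Fin p) → EuclideanSpace ℝ (Fin n))
    (W : EuclideanSpace ℝ (Fin n) → EuclideanSpace ℝ (Fin p) → ℝ)
    (Φ : EuclideanSpace ℝ (Fin n) → EuclideanSpace ℝ (Fin p) → ℝ)
    (Q : EuclideanSpace ℝ (Fin p) → EuclideanSpace ℝ (Fin p) →L[ℝ] EuclideanSpace ℝ (Fin p))
    (ℓ : ℝ≥0) (α β γ ζ L : ℝ)
    (hα : 0 < α) (hβ : 0 < β) (hγ : 0 < γ) (hζ : 0 < ζ) (hL : 0 < L)
    -- plant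
    (hf_smooth : ContDiff ℝ 1 (Function.uncurry f))
    (hh_diff : Differentiable ℝ h)
    (hh_lip : LipschitzWith ℓ h)
    (hsteady : ∀ u, f (h u) u = 0)
    -- Lyapunov function for the plant
    (hW_diff : Differentiable ℝ (Function.uncurry W))
    (hW_lb : ∀ x u, α * ‖x - h u‖ ^ 2 ≤ W x u)
    (hW_ub : ∀ x u, W x u ≤ β * ‖x - h u‖ ^ 2)
    (hW_decay : ∀ x u, ⟪gradient (fun y => W y u) x, f x u⟫ ≤ -γ * ‖x - h u‖ ^ 2)
    (hW_gradu : ∀ x u, ‖gradient (fun v => W x v) u‖ ≤ ζ * ‖x - h u‖)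
    -- objective
    (hΦ_smooth : ContDiff ℝ 1 (Function.uncurry Φ))
    (hlevel : ∀ c : ℝ, IsCompact {u : EuclideanSpace ℝ (Fin p) | Φ (h u) u ≤ c})
    (hLbound : ∀ x x' u,
      ‖(ContinuousLinearMap.adjoint (fderiv ℝ h u)
            (gradient (fun y => Φ y u) x' - gradient (fun y => Φ y u) x) +
          (gradient (fun v => Φ x' v) u - gradient (fun v => Φ x v) u))‖ ≤ L * ‖x' - x‖)
    -- metric
    (hQ_lip : LocallyLipschitz Q)
    (hQ_symm : ∀ u v w, ⟪Q u v, w⟫ = ⟪v, Q u w⟫)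
    (hQ_pos : ∀ u v, v ≠ 0 → 0 < ⟪Q u v, v⟫)
    (hQ_bound : ∃ q : ℝ, (∀ u, ‖Q u‖ ≤ q) ∧ q < γ / (ζ * L))
    -- a complete solution of the interconnection
    (x : ℝ → EuclideanSpace ℝ (Fin n)) (u : ℝ → EuclideanSpace ℝ (Fin p))
    (hsolx : ∀ t ≥ (0 : ℝ), HasDerivAt x (f (x t) (u t)) t)
    (hsolu : ∀ t ≥ (0 : ℝ), HasDerivAt u
      (-(Q (u t) (ContinuousLinearMap.adjoint (fderiv ℝ h (u t))
          (gradient (fun y => Φ y (u t)) (x t)) +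
        gradient (fun v => Φ (x t) v) (u t)))) t) :
    Tendsto (fun t => Metric.infDist (x t, u t)
      {q : EuclideanSpace ℝ (Fin n) × EuclideanSpace ℝ (Fin p) |
        q.1 = h q.2 ∧
        ContinuousLinearMap.adjoint (fderiv ℝ h q.2) (gradient (fun y => Φ y q.2) q.1) +
          gradient (fun v => Φ q.1 v) q.2 = 0})
      atTop (nhds 0) := by
  obtain ⟨q, hQ_le, hq⟩ := hQ_bound
  exact stmt3_general hα hγ hζ hL hf_smooth hsteady hW_diff hW_lb hW_ub hW_decay hW_gradu
    hΦ_smooth hlevel (fun x u => by rw [reducedGradient_sub]; exact hLbound (h u) x u)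
    hQ_lip.continuous hQ_symm hQ_pos hQ_le hq (fun t ht => (hsolx t ht).hasDerivWithinAt)
    fun t ht => (hsolu t ht).hasDerivWithinAt
end
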